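/- (Net force identity for CLE dislocation fields.) Let d = 2, V ∈ C³(ℝ^{N×ℛ}) with the point symmetry, C_{σρ} := ∂²V/∂g_σ∂g_ρ(0). Let x̂ ∈ ℝ², Γ := {x ∈ ℝ² : x₂ = x̂₂, x₁ ≥ x̂₁} with Γ ∩ Λ = ∅, b ∈ ℝ^N, and let u ∈ C³(ℝ²∖Γ; ℝ^N) be such that ∇u extends to a C² field on ℝ²∖{x̂}, the one-sided limits across Γ∖{x̂} satisfy u(x+) − u(x−) = −b and ∇_{e₂}u(x+) = ∇_{e₂}u(x−), −div(ℂ[∇u]) = 0 on ℝ²∖{x̂}, and |∇^j u(x)| ≤ c|x−x̂|^{−j} for j = 1,2,3 and all x ≠ x̂. Assume in addition that the lattice finite differences satisfy |D_ρ u(ℓ)| ≤ c(1+|ℓ−x̂|)^{−1} for all ℓ ∈ Λ and ρ ∈ ℛ. Then for every smooth cutoff η : ℝ² → [0,1] with η = 1 on B₁(0) and η = 0 outside B₂(0), the limits lim_{R→∞} ∑_{ℓ∈Λ} η(ℓ/R) δE(u)(ℓ) and lim_{R→∞} ∑_{ℓ∈Λ} η(ℓ/R) H[u](ℓ) exist,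 are independent of η, and both equal −∫_{∂B₁(x̂)} ℂ[∇u]ν dσ. -/

import Mathlib

noncomputable section

open scoped BigOperators
open MeasureTheory Filter Topology

namespace Defect

abbrev Vec (n : ℕ) : Type := Fin n → ℝ

/-- Euclidean norm of a vector in `ℝ^n`. -/
def enorm {n : ℕ} (v : Vec n) : ℝ := Real.sqrt (∑ i, (v i) ^ 2)

/-- `⟨x⟩ := |x| + 2`. -/
def ang {n : ℕ} (v : Vec n) : ℝ := enorm v + 2

def dotV {n : ℕ} (x y : Vec n) : ℝ := ∑ i, x i * y i

/-- Matrix-vector product for a plain `Fin N → Fin N → ℝ` matrix. -/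
def mulV {N : ℕ} (M : Fin N → Fin N → ℝ) (v : Vec N) : Vec N := fun i => ∑ j, M i j * v j

/-- Euclidean (Frobenius) norm of an `N × N` array. -/
def mnorm {N : ℕ} (M : Fin N → Fin N → ℝ) : ℝ := Real.sqrt (∑ i, ∑ j, (M i j) ^ 2)

/-- The lattice point `A z` for `z ∈ ℤ^d`. -/
def latticePt (d : ℕ) (A : Matrix (Fin d) (Fin d) ℝ) (z : Fin d → ℤ) : Vec d :=
  fun i => ∑ j, A i j * (z j : ℝ)

/-- The Bravais lattice `Λ = A ℤ^d`. -/
def Lattice (d : ℕ) (A : Matrix (Fin d) (Fin d) ℝ) : Set (Vec d) :=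
  Set.range (latticePt d A)

/-- First-order finite difference `D_ρ u (ℓ) = u(ℓ+ρ) - u(ℓ)`. -/
def D1 {d : ℕ} {M : Type} [AddCommGroup M] (ρ : Vec d) (u : Vec d → M) (ℓ : Vec d) : M :=
  u (ℓ + ρ) - u ℓ

/-- Iterated finite difference `D_{ρ₁} ⋯ D_{ρ_j} u (ℓ)` (closed form). -/
def Dmulti {d : ℕ} {M : Type} [AddCommGroup M] [Module ℝ M] {j : ℕ}
    (ρs : Fin j → Vec d) (u : Vec d → M) (ℓ : Vec d) : M :=
  ∑ S : Finset (Fin j), ((-1 : ℝ) ^ (j - S.card)) • u (ℓ + ∑ i ∈ S, ρs i)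

/-- `|Du(ℓ)|²`, the squared Euclidean norm of the stencil of first differences. -/
def Dnorm1Sq {d N : ℕ} (R : Finset (Vec d)) (u : Vec d → Vec N) (ℓ : Vec d) : ℝ :=
  ∑ ρ ∈ R, (enorm (D1 ρ u ℓ)) ^ 2

/-- `|D^j u(ℓ)|`, the Euclidean norm of the array `(D_{ρ⃗} u(ℓ))_{ρ⃗ ∈ R^j}`. -/
def DnormJ {d N : ℕ} (R : Finset (Vec d)) (j : ℕ) (u : Vec d → Vec N) (ℓ : Vec d) : ℝ :=
  Real.sqrt (∑ ρs : Fin j → {x // x ∈ R},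
    (enorm (Dmulti (fun i => (ρs i : Vec d)) u ℓ)) ^ 2)

/-- The linearized lattice operator
`H[u](ℓ) = ∑_{σ,ρ∈R} (C_{σρ} D_ρ u(ℓ-σ) - C_{σρ} D_ρ u(ℓ))`. -/
def Hop (d N : ℕ) (R : Finset (Vec d)) (C : Vec d → Vec d → Fin N → Fin N → ℝ)
    (u : Vec d → Vec N) (ℓ : Vec d) : Vec N :=
  ∑ σ ∈ R, ∑ ρ ∈ R, (mulV (C σ ρ) (D1 ρ u (ℓ - σ)) - mulV (C σ ρ) (D1 ρ u ℓ))

/-- `u ∈ 𝓗¹`. -/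
def InH1 {d N : ℕ} (A : Matrix (Fin d) (Fin d) ℝ) (R : Finset (Vec d))
    (u : Vec d → Vec N) : Prop :=
  Summable fun z : Fin d → ℤ => Dnorm1Sq R u (latticePt d A z)

/-- `u ∈ 𝓗ᶜ` : the stencil `Du` has bounded support on the lattice. -/
def InHc {d N : ℕ} (A : Matrix (Fin d) (Fin d) ℝ) (R : Finset (Vec d))
    (u : Vec d → Vec N) : Prop :=
  ∃ rad : ℝ, ∀ z : Fin d → ℤ, rad ≤ enorm (latticePt d A z) →
    ∀ ρ ∈ R, D1 ρ u (latticePt d A z) = 0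

/-- Stability of the lattice operator `H`. -/
def IsStable (d N : ℕ) (A : Matrix (Fin d) (Fin d) ℝ) (R : Finset (Vec d))
    (C : Vec d → Vec d → Fin N → Fin N → ℝ) : Prop :=
  ∃ c₀ : ℝ, 0 < c₀ ∧ ∀ u : Vec d → Vec N, InHc A R u →
    c₀ * (∑' z : Fin d → ℤ, Dnorm1Sq R u (latticePt d A z)) ≤
      ∑' z : Fin d → ℤ, ∑ σ ∈ R, ∑ ρ ∈ R,
        dotV (D1 σ u (latticePt d A z)) (mulV (C σ ρ) (D1 ρ u (latticePt d A z)))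

/-- `k`-th column of a matrix-valued function. -/
def col {d N : ℕ} (G : Vec d → Fin N → Fin N → ℝ) (k : Fin N) : Vec d → Vec N :=
  fun x i => G x i k

/-- `|D^j 𝒢(ℓ)|` for matrix-valued `𝒢`. -/
def DnormJmat {d N : ℕ} (R : Finset (Vec d)) (j : ℕ)
    (G : Vec d → Fin N → Fin N → ℝ) (ℓ : Vec d) : ℝ :=
  Real.sqrt (∑ k : Fin N, (DnormJ R j (col G k) ℓ) ^ 2)

/-- `𝒢` is a lattice Green's function for `H`. -/
def IsLatticeGreen (d N : ℕ) (A : Matrix (Fin d) (Fin d) ℝ) (R : Finset (Vec d))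
    (C : Vec d → Vec d → Fin N → Fin N → ℝ) (G : Vec d → Fin N → Fin N → ℝ) : Prop :=
  (∀ (k : Fin N) (z : Fin d → ℤ),
      Hop d N R C (col G k) (latticePt d A z) =
        if latticePt d A z = 0 then Pi.single k 1 else 0) ∧
  (∀ j : ℕ, 1 ≤ j → ∃ cj : ℝ, ∀ z : Fin d → ℤ,
      DnormJmat R j G (latticePt d A z) ≤
        cj * ang (latticePt d A z) ^ ((2 : ℝ) - d - j))

/-- A symmetric array `b ∈ (ℝ^{Fin d})^{⊙ i}`. -/
def SymArr {d i : ℕ} (b : (Fin i → Fin d) → ℝ) : Prop :=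
  ∀ (π : Equiv.Perm (Fin i)) (σv : Fin i → Fin d), b (σv ∘ π) = b σv

/-- `b : D_𝒮^i f`, a multipole term built from the basis `s`. -/
def multipole (d N : ℕ) (s : Fin d → Vec d) (i : ℕ) (b : (Fin i → Fin d) → ℝ)
    (f : Vec d → Vec N) : Vec d → Vec N :=
  fun ℓ => ∑ σv : Fin i → Fin d, b σv • Dmulti (fun m => s (σv m)) f ℓ

/-- Iterated partial derivative `∂_{j₁} ⋯ ∂_{j_i} f (x)`. -/
def pderivMulti {d : ℕ} (i : ℕ) (js : Fin i → Fin d) (f : Vec d → ℝ) (x : Vec d) : ℝ :=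
  iteratedFDeriv ℝ i f x (fun m => Pi.single (js m) (1 : ℝ))

/-- `a : ∇^i f (x)` for a tensor `a ∈ (ℝ^d)^{⊗ i}`. -/
def aContract {d : ℕ} (i : ℕ) (a : (Fin i → Fin d) → ℝ) (f : Vec d → ℝ) (x : Vec d) : ℝ :=
  ∑ js : Fin i → Fin d, a js * pderivMulti i js f x

/-- Elementary tensor `σ⃗^⊗` as an array. -/
def tensorPow {d k : ℕ} (σs : Fin k → Vec d) : (Fin k → Fin d) → ℝ :=
  fun js => ∏ m, σs m (js m)

/-- Symmetric tensor product `σ⃗^⊙`. -/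
def symTensor {d k : ℕ} (σs : Fin k → Vec d) : (Fin k → Fin d) → ℝ :=
  fun js => ((k.factorial : ℝ))⁻¹ * ∑ π : Equiv.Perm (Fin k), tensorPow (σs ∘ π) js

/-- A symmetric tensor (array invariant under index permutations). -/
def SymTensor {d k : ℕ} (T : (Fin k → Fin d) → ℝ) : Prop :=
  ∀ (π : Equiv.Perm (Fin k)) (js : Fin k → Fin d), T (js ∘ π) = T js

/-- `∂V/∂g_ρ (gs)` as a vector in `ℝ^N`. -/
def gradV {d N : ℕ} (R : Finset (Vec d)) (V : ({x // x ∈ R} → Vec N) → ℝ)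
    (ρ : {x // x ∈ R}) (gs : {x // x ∈ R} → Vec N) : Vec N :=
  fun i => fderiv ℝ V gs (Pi.single ρ (Pi.single i 1))

/-- The finite-difference stencil `Du(ℓ) = (D_ρ u(ℓ))_{ρ ∈ R}`. -/
def Dstencil {d N : ℕ} (R : Finset (Vec d)) (u : Vec d → Vec N) (ℓ : Vec d) :
    {x // x ∈ R} → Vec N :=
  fun ρ => D1 (ρ : Vec d) u ℓ

/-- `C_{σρ} = ∂²V/∂g_σ ∂g_ρ (0)`. -/
def CofV {d N : ℕ} (R : Finset (Vec d)) (V : ({x // x ∈ R} → Vec N) → ℝ)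
    (σ ρ : Vec d) (i j : Fin N) : ℝ :=
  if hσ : σ ∈ R then
    if hρ : ρ ∈ R then
      iteratedFDeriv ℝ 2 V 0
        ![Pi.single ⟨σ, hσ⟩ (Pi.single i 1), Pi.single ⟨ρ, hρ⟩ (Pi.single j 1)]
    else 0
  else 0

/-- Summand of the first variation `δE(u)[v]` at a site. -/
def deltaEsite {d N : ℕ} (R : Finset (Vec d)) (V : ({x // x ∈ R} → Vec N) → ℝ)
    (u v : Vec d → Vec N) (ℓ : Vec d) : ℝ :=
  ∑ ρ ∈ R.attach, dotV (gradV R V ρ (Dstencil R u ℓ)) (D1 (ρ : Vec d) v ℓ)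

/-- The pointwise atomistic force `δE(u)(ℓ)`. -/
def deltaEpt {d N : ℕ} (R : Finset (Vec d)) (V : ({x // x ∈ R} → Vec N) → ℝ)
    (u : Vec d → Vec N) (ℓ : Vec d) : Vec N :=
  ∑ ρ ∈ R.attach,
    (gradV R V ρ (Dstencil R u (ℓ - (ρ : Vec d))) - gradV R V ρ (Dstencil R u ℓ))

/-- Point symmetry of the site potential. -/
def PointSym {d N : ℕ} (R : Finset (Vec d)) (hRsym : ∀ ρ ∈ R, -ρ ∈ R)
    (V : ({x // x ∈ R} → Vec N) → ℝ) : Prop :=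
  ∀ gs : {x // x ∈ R} → Vec N,
    V (fun ρ => -(gs ⟨-(ρ : Vec d), hRsym _ ρ.2⟩)) = V gs

/-- The Cauchy–Born elasticity tensor `ℂ_{iajb}`. -/
def CB {d N : ℕ} (A : Matrix (Fin d) (Fin d) ℝ) (R : Finset (Vec d))
    (C : Vec d → Vec d → Fin N → Fin N → ℝ)
    (i : Fin N) (a : Fin d) (j : Fin N) (b : Fin d) : ℝ :=
  (|A.det|)⁻¹ * ∑ ρ ∈ R, ∑ σ ∈ R, C ρ σ i j * ρ a * σ b

/-!
Both forces are, in each component `i`, of the form `f(ℓ) = ∑_ρ (w_ρ(ℓ - ρ) - w_ρ(ℓ))` with bond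
forces `w_ρ` of size `O(|ℓ|⁻¹)`. Summing against the dilated cutoff `η_r = η(·/r)` by parts and
expanding `η_r` to first order replaces the sum by `∑_ℓ ∇η_r(ℓ) · ∑_ρ w_ρ(ℓ) ρ`. Up to
`O(|ℓ|⁻²)`, the bond forces are the linear ones of the homogeneous deformation `∇u(ℓ)`, whose first
moment `∑_ρ w_ρ(ℓ) ρ` is the cell volume times row `i` of the Cauchy–Born stress `S = ℂ[∇u]`. All
errors vanish as `r → ∞`, because `∇η_r` has size `1/r` and lives on an annulus of radius `~ r`.
What remains is a Riemann sum for `∫ ∇η_r · S`, which by the divergence theorem and `div S = 0` is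
minus the flux of `S` through the unit circle.
-/

section Polar

/-- The divergence `∑ₐ ∂ₐ Xₐ` of a vector field on `ℝ^d`. -/
def divergence {d : ℕ} (X : Vec d → Vec d) (x : Vec d) : ℝ :=
  ∑ a, fderiv ℝ X x (Pi.single a 1) a

/-- The unit vector `e_r = (cos θ, sin θ)`, also the outward unit normal of the unit circle. -/
def radialDir (θ : ℝ) : Vec 2 := ![Real.cos θ, Real.sin θ]

/-- The unit vector `e_θ = (-sin θ, cos θ)`. -/
def angularDir (θ : ℝ) : Vec 2 := ![-Real.sin θ, Real.cos θ]

/-- The point with polar coordinates `(r, θ)` about `x₀`. -/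
def polarPoint (x₀ : Vec 2) (p : ℝ × ℝ) : Vec 2 := x₀ + p.1 • radialDir p.2

/-- The component `r X·e_r` of a planar vector field in polar coordinates about `x₀`. -/
def radialFlux (X : Vec 2 → Vec 2) (x₀ : Vec 2) (p : ℝ × ℝ) : ℝ :=
  p.1 * dotV (X (polarPoint x₀ p)) (radialDir p.2)

/-- The component `X·e_θ` of a planar vector field in polar coordinates about `x₀`. -/
def angularFlux (X : Vec 2 → Vec 2) (x₀ : Vec 2) (p : ℝ × ℝ) : ℝ :=
  dotV (X (polarPoint x₀ p)) (angularDir p.2)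

lemma hasDerivAt_radialDir (θ : ℝ) : HasDerivAt radialDir (angularDir θ) θ := by
  rw [hasDerivAt_pi, Fin.forall_fin_two]
  exact ⟨Real.hasDerivAt_cos θ, Real.hasDerivAt_sin θ⟩

lemma hasDerivAt_angularDir (θ : ℝ) : HasDerivAt angularDir (-radialDir θ) θ := by
  rw [hasDerivAt_pi, Fin.forall_fin_two]
  exact ⟨(Real.hasDerivAt_sin θ).neg, Real.hasDerivAt_cos θ⟩

lemma differentiable_radialDir : Differentiable ℝ radialDir :=
  fun θ ↦ (hasDerivAt_radialDir θ).differentiableAt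

lemma differentiable_angularDir : Differentiable ℝ angularDir :=
  fun θ ↦ (hasDerivAt_angularDir θ).differentiableAt

lemma radialDir_periodic : Function.Periodic radialDir (2 * Real.pi) := fun θ ↦ by
  simp only [radialDir, Real.cos_periodic θ, Real.sin_periodic θ]

lemma enorm_smul_radialDir (r θ : ℝ) : enorm (r • radialDir θ) = |r| := by
  have h : (r * Real.cos θ) ^ 2 + (r * Real.sin θ) ^ 2 = r ^ 2 := by
    linear_combination r ^ 2 * Real.sin_sq_add_cos_sq θ
  simp [enorm, radialDir, Fin.sum_univ_two, h, Real.sqrt_sq_eq_abs]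

lemma enorm_polarPoint_sub (x₀ : Vec 2) (p : ℝ × ℝ) : enorm (polarPoint x₀ p - x₀) = |p.1| := by
  rw [polarPoint, add_sub_cancel_left, enorm_smul_radialDir]

lemma polarPoint_ne {x₀ : Vec 2} {p : ℝ × ℝ} (hp : 0 < p.1) : polarPoint x₀ p ≠ x₀ := fun h ↦ by
  have h₀ := enorm_polarPoint_sub x₀ p
  rw [h, sub_self, abs_of_pos hp] at h₀
  simp [enorm, hp.ne] at h₀

lemma differentiable_polarPoint (x₀ : Vec 2) : Differentiable ℝ (polarPoint x₀) :=
  ((differentiable_fst (𝕜 := ℝ) (E := ℝ) (F := ℝ)).smul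
    (differentiable_radialDir.comp differentiable_snd)).const_add x₀

lemma hasDerivAt_dotV {d : ℕ} {X Y : ℝ → Vec d} {X' Y' : Vec d} {t : ℝ}
    (hX : HasDerivAt X X' t) (hY : HasDerivAt Y Y' t) :
    HasDerivAt (fun s ↦ dotV (X s) (Y s)) (dotV X' (Y t) + dotV (X t) Y') t := by
  simp only [dotV, ← Finset.sum_add_distrib]
  exact HasDerivAt.fun_sum fun i _ ↦ (hasDerivAt_pi.1 hX i).mul (hasDerivAt_pi.1 hY i)

lemma differentiableAt_dotV {E : Type*} [NormedAddCommGroup E] [NormedSpace ℝ E] {d : ℕ}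
    {X Y : E → Vec d} {x : E} (hX : DifferentiableAt ℝ X x) (hY : DifferentiableAt ℝ Y x) :
    DifferentiableAt ℝ (fun y ↦ dotV (X y) (Y y)) x :=
  DifferentiableAt.fun_sum fun i _ ↦ (differentiableAt_pi.1 hX i).mul (differentiableAt_pi.1 hY i)

lemma differentiableAt_radialFlux {X : Vec 2 → Vec 2} {x₀ : Vec 2} {p : ℝ × ℝ}
    (hX : DifferentiableAt ℝ X (polarPoint x₀ p)) : DifferentiableAt ℝ (radialFlux X x₀) p :=
  differentiableAt_fst.mul <| differentiableAt_dotV (hX.comp p (differentiable_polarPoint x₀ p))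
    (differentiable_radialDir.comp differentiable_snd p)

lemma differentiableAt_angularFlux {X : Vec 2 → Vec 2} {x₀ : Vec 2} {p : ℝ × ℝ}
    (hX : DifferentiableAt ℝ X (polarPoint x₀ p)) : DifferentiableAt ℝ (angularFlux X x₀) p :=
  differentiableAt_dotV (hX.comp p (differentiable_polarPoint x₀ p))
    (differentiable_angularDir.comp differentiable_snd p)

lemma trace_eq_radialDir_add_angularDir (L : Vec 2 →L[ℝ] Vec 2) (θ : ℝ) :
    ∑ a, L (Pi.single a 1) a =
      dotV (L (radialDir θ)) (radialDir θ) + dotV (L (angularDir θ)) (angularDir θ) := by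
  have hr : radialDir θ = Real.cos θ • Pi.single 0 1 + Real.sin θ • Pi.single 1 1 := by
    ext i; fin_cases i <;> simp [radialDir]
  have ht : angularDir θ = -Real.sin θ • Pi.single 0 1 + Real.cos θ • Pi.single 1 1 := by
    ext i; fin_cases i <;> simp [angularDir]
  rw [hr, ht]
  simp only [dotV, Fin.sum_univ_two, map_add, map_smul, Pi.add_apply, Pi.smul_apply, smul_eq_mul,
    Pi.single_eq_same, Pi.single_eq_of_ne zero_ne_one, Pi.single_eq_of_ne one_ne_zero]
  linear_combination -(L (Pi.single 0 1) 0 + L (Pi.single 1 1) 1) * Real.sin_sq_add_cos_sq θ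

lemma fderiv_radialFlux_add_fderiv_angularFlux {X : Vec 2 → Vec 2} {x₀ : Vec 2} {p : ℝ × ℝ}
    (hX : DifferentiableAt ℝ X (polarPoint x₀ p)) :
    fderiv ℝ (radialFlux X x₀) p (1, 0) + fderiv ℝ (angularFlux X x₀) p (0, 1) =
      p.1 * divergence X (polarPoint x₀ p) := by
  obtain ⟨r, θ⟩ := p
  have hline_r : HasDerivAt (fun t : ℝ ↦ ((t, θ) : ℝ × ℝ)) (1, 0) r :=
    (hasDerivAt_id r).prodMk (hasDerivAt_const r θ)
  have hline_θ : HasDerivAt (fun t : ℝ ↦ ((r, t) : ℝ × ℝ)) (0, 1) θ :=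
    (hasDerivAt_const θ r).prodMk (hasDerivAt_id θ)
  have hX_r : HasDerivAt (fun t ↦ X (polarPoint x₀ (t, θ)))
      (fderiv ℝ X (polarPoint x₀ (r, θ)) (radialDir θ)) r :=
    hX.hasFDerivAt.comp_hasDerivAt r <| by
      simpa [polarPoint] using ((hasDerivAt_id r).smul_const (radialDir θ)).const_add x₀
  have hX_θ : HasDerivAt (fun t ↦ X (polarPoint x₀ (r, t)))
      (fderiv ℝ X (polarPoint x₀ (r, θ)) (r • angularDir θ)) θ :=
    hX.hasFDerivAt.comp_hasDerivAt θ (((hasDerivAt_radialDir θ).const_smul r).const_add x₀)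
  have h_r := (differentiableAt_radialFlux hX).hasFDerivAt.comp_hasDerivAt r hline_r
  have h_θ := (differentiableAt_angularFlux hX).hasFDerivAt.comp_hasDerivAt θ hline_θ
  rw [h_r.unique ((hasDerivAt_id r).mul (hasDerivAt_dotV hX_r (hasDerivAt_const r (radialDir θ)))),
    h_θ.unique (hasDerivAt_dotV hX_θ (hasDerivAt_angularDir θ)), divergence,
    trace_eq_radialDir_add_angularDir _ θ]
  simp only [dotV, Fin.sum_univ_two, map_smul, Pi.smul_apply, Pi.neg_apply, Pi.zero_apply,
    smul_eq_mul, id]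
  ring

lemma integral_eq_integral_polarPoint (f : Vec 2 → ℝ) (x₀ : Vec 2) :
    ∫ x, f x = ∫ p in polarCoord.target, p.1 * f (polarPoint x₀ p) := by
  rw [← integral_add_left_eq_self f x₀,
    ← ((volume_preserving_finTwoArrow ℝ).symm _).integral_comp
      (MeasurableEquiv.measurableEmbedding _), ← integral_comp_polarCoord_symm]
  refine integral_congr_ae (ae_of_all _ fun p ↦ ?_)
  have h : (MeasurableEquiv.finTwoArrow.symm (polarCoord.symm p) : Vec 2) =
      p.1 • radialDir p.2 := by
    ext i; fin_cases i <;> simp [radialDir, MeasurableEquiv.finTwoArrow]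
  simp only [h, polarPoint, smul_eq_mul]

lemma continuousOn_divergence {d : ℕ} {X : Vec d → Vec d} {U : Set (Vec d)} (hU : IsOpen U)
    (hX : ContDiffOn ℝ 1 X U) : ContinuousOn (divergence X) U :=
  continuousOn_finsetSum _ fun a _ ↦ (continuous_apply a).comp_continuousOn <|
    (hX.continuousOn_fderiv_of_isOpen hU le_rfl).clm_apply continuousOn_const

/-- The fluxes through the sides `θ = ±π` of the polar rectangle cancel. -/
lemma integral_divergence_annulus {X : Vec 2 → Vec 2} {x₀ : Vec 2}
    (hX : ContDiffOn ℝ 1 X {x | x ≠ x₀}) {r₁ r₂ : ℝ} (hr₁ : 0 < r₁) (hr : r₁ ≤ r₂) :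
    ∫ p in Set.Icc (r₁, -Real.pi) (r₂, Real.pi), p.1 * divergence X (polarPoint x₀ p) =
      (∫ θ in -Real.pi..Real.pi, radialFlux X x₀ (r₂, θ)) -
        ∫ θ in -Real.pi..Real.pi, radialFlux X x₀ (r₁, θ) := by
  have hne : ∀ p ∈ Set.Icc (r₁, -Real.pi) (r₂, Real.pi), polarPoint x₀ p ≠ x₀ :=
    fun p hp ↦ polarPoint_ne (hr₁.trans_le hp.1.1)
  have hdiff : ∀ p ∈ Set.Icc (r₁, -Real.pi) (r₂, Real.pi),
      DifferentiableAt ℝ X (polarPoint x₀ p) := fun p hp ↦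
    (hX.differentiableOn one_ne_zero).differentiableAt (isOpen_ne.mem_nhds (hne p hp))
  have hsub : Set.Ioo r₁ r₂ ×ˢ Set.Ioo (-Real.pi) Real.pi ⊆
      Set.Icc (r₁, -Real.pi) (r₂, Real.pi) := by
    rw [← Set.Icc_prod_Icc]
    exact Set.prod_mono Set.Ioo_subset_Icc_self Set.Ioo_subset_Icc_self
  have hfderiv : Set.EqOn (fun p ↦ p.1 * divergence X (polarPoint x₀ p))
      (fun p ↦ fderiv ℝ (radialFlux X x₀) p (1, 0) + fderiv ℝ (angularFlux X x₀) p (0, 1))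
      (Set.Icc (r₁, -Real.pi) (r₂, Real.pi)) :=
    fun p hp ↦ (fderiv_radialFlux_add_fderiv_angularFlux (hdiff p hp)).symm
  have hcont : ContinuousOn (fun p : ℝ × ℝ ↦ p.1 * divergence X (polarPoint x₀ p))
      (Set.Icc (r₁, -Real.pi) (r₂, Real.pi)) :=
    continuousOn_fst.mul <| (continuousOn_divergence isOpen_ne hX).comp
      (differentiable_polarPoint x₀).continuous.continuousOn hne
  rw [setIntegral_congr_fun measurableSet_Icc hfderiv,
    integral_divergence_prod_Icc_of_hasFDerivAt_of_le (radialFlux X x₀) (angularFlux X x₀) _ _ _ _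
      ⟨hr, by linarith [Real.pi_pos]⟩
      (fun p hp ↦ (differentiableAt_radialFlux (hdiff p hp)).continuousAt.continuousWithinAt)
      (fun p hp ↦ (differentiableAt_angularFlux (hdiff p hp)).continuousAt.continuousWithinAt)
      (fun p hp ↦ (differentiableAt_radialFlux (hdiff p (hsub hp))).hasFDerivAt)
      (fun p hp ↦ (differentiableAt_angularFlux (hdiff p (hsub hp))).hasFDerivAt)
      ((hcont.integrableOn_compact isCompact_Icc).congr_fun hfderiv measurableSet_Icc)]
  have hsides : ∀ r, angularFlux X x₀ (r, Real.pi) = angularFlux X x₀ (r, -Real.pi) := fun r ↦ by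
    simp [angularFlux, angularDir, polarPoint, radialDir]
  simp only [hsides, sub_self, zero_add]

/-- The outward flux of `X` through the unit circle about `x₀`. -/
def unitCircleFlux (X : Vec 2 → Vec 2) (x₀ : Vec 2) : ℝ :=
  ∫ θ in (0 : ℝ)..2 * Real.pi, dotV (X (x₀ + radialDir θ)) (radialDir θ)

lemma integral_radialFlux_one (X : Vec 2 → Vec 2) (x₀ : Vec 2) :
    ∫ θ in -Real.pi..Real.pi, radialFlux X x₀ (1, θ) = unitCircleFlux X x₀ := by
  have hper : Function.Periodic (fun θ ↦ dotV (X (x₀ + radialDir θ)) (radialDir θ))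
      (2 * Real.pi) := fun θ ↦ by simp only [radialDir_periodic θ]
  have hshift := hper.intervalIntegral_add_eq (-Real.pi) 0
  rw [zero_add, show -Real.pi + 2 * Real.pi = Real.pi by ring] at hshift
  simpa only [radialFlux, polarPoint, one_smul, one_mul, unitCircleFlux] using hshift

lemma continuous_enorm {d : ℕ} : Continuous (enorm : Vec d → ℝ) :=
  Real.continuous_sqrt.comp <| continuous_finsetSum _ fun i _ ↦ (continuous_apply i).pow 2

lemma integral_divergence_eq_neg_unitCircleFlux {X : Vec 2 → Vec 2} {x₀ : Vec 2}
    (hX : ContDiffOn ℝ 1 X {x | x ≠ x₀})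
    (hdiv : ∀ x, x ≠ x₀ → enorm (x - x₀) ≤ 1 → divergence X x = 0)
    {r : ℝ} (hr : 1 ≤ r) (hsupp : ∀ x, r ≤ enorm (x - x₀) → X x = 0) :
    ∫ x, divergence X x = -unitCircleFlux X x₀ := by
  have hdiv_out : ∀ x, r < enorm (x - x₀) → divergence X x = 0 := fun x hx ↦ by
    have hX₀ : X =ᶠ[𝓝 x] fun _ ↦ 0 := by
      filter_upwards [(continuous_enorm.comp (continuous_sub_right x₀)).continuousAt.eventually
        (lt_mem_nhds hx)] with y hy using hsupp y hy.le
    simp [divergence, hX₀.fderiv_eq]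
  have hIcc : Set.Ioc 1 r ×ˢ Set.Ioo (-Real.pi) Real.pi =ᵐ[volume]
      Set.Icc ((1 : ℝ), -Real.pi) (r, Real.pi) := by
    rw [← Set.Icc_prod_Icc]
    exact Measure.set_prod_ae_eq Ioc_ae_eq_Icc Ioo_ae_eq_Icc
  have hout : ∀ θ, radialFlux X x₀ (r, θ) = 0 := fun θ ↦ by
    have hle : r ≤ enorm (polarPoint x₀ (r, θ) - x₀) := by
      simpa only [enorm_polarPoint_sub] using le_abs_self r
    simp [radialFlux, dotV, hsupp _ hle]
  calc ∫ x, divergence X x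
      = ∫ p in polarCoord.target, p.1 * divergence X (polarPoint x₀ p) :=
        integral_eq_integral_polarPoint _ x₀
    _ = ∫ p in Set.Ioc 1 r ×ˢ Set.Ioo (-Real.pi) Real.pi,
          p.1 * divergence X (polarPoint x₀ p) := by
        refine setIntegral_eq_of_subset_of_forall_sdiff_eq_zero
          polarCoord.open_target.measurableSet
          (Set.prod_mono (fun s hs ↦ zero_lt_one.trans hs.1) subset_rfl) fun p hp ↦ ?_
        have hp₀ : 0 < p.1 := hp.1.1
        have henorm := (enorm_polarPoint_sub x₀ p).trans (abs_of_pos hp₀)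
        rcases le_or_gt p.1 1 with hp₁ | hp₁
        · rw [hdiv _ (polarPoint_ne hp₀) (henorm.trans_le hp₁), mul_zero]
        · have hpr : r < p.1 := not_le.1 fun hpr ↦ hp.2 ⟨⟨hp₁, hpr⟩, hp.1.2⟩
          rw [hdiv_out _ (hpr.trans_eq henorm.symm), mul_zero]
    _ = ∫ p in Set.Icc (1, -Real.pi) (r, Real.pi), p.1 * divergence X (polarPoint x₀ p) :=
        setIntegral_congr_set hIcc
    _ = -unitCircleFlux X x₀ := by
        rw [integral_divergence_annulus hX one_pos hr, integral_radialFlux_one]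
        simp only [hout, intervalIntegral.integral_zero, zero_sub]

end Polar

section Norms

variable {d : ℕ}

lemma norm_le_enorm (v : Vec d) : ‖v‖ ≤ enorm v :=
  (pi_norm_le_iff_of_nonneg (Real.sqrt_nonneg _)).2 fun i ↦ Real.abs_le_sqrt <|
    Finset.single_le_sum (f := fun j ↦ v j ^ 2) (fun j _ ↦ sq_nonneg (v j)) (Finset.mem_univ i)

lemma enorm_le_card_mul_norm (v : Vec d) : enorm v ≤ d * ‖v‖ := by
  have hcoord : ∑ i, v i ^ 2 ≤ ∑ _i : Fin d, ‖v‖ ^ 2 := Finset.sum_le_sum fun i _ ↦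
    sq_le_sq' (abs_le.1 (norm_le_pi_norm v i)).1 (abs_le.1 (norm_le_pi_norm v i)).2
  refine Real.sqrt_le_iff.2 ⟨by positivity, hcoord.trans ?_⟩
  have hd : (d : ℝ) ≤ (d : ℝ) ^ 2 := by exact_mod_cast Nat.le_self_pow two_ne_zero d
  rw [Finset.sum_const, Finset.card_fin, nsmul_eq_mul, mul_pow]
  gcongr

end Norms

section LatticeSums

variable {d : ℕ} {A : Matrix (Fin d) (Fin d) ℝ}

lemma latticePt_eq_mulVec (z : Fin d → ℤ) :
    latticePt d A z = A.mulVec (fun i ↦ (z i : ℝ)) := rfl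

lemma latticePt_add (y z : Fin d → ℤ) :
    latticePt d A (y + z) = latticePt d A y + latticePt d A z := by
  simp only [latticePt_eq_mulVec, ← Matrix.mulVec_add]
  congr 1
  ext i
  simp

lemma add_mem_Lattice {x y : Vec d} (hx : x ∈ Lattice d A) (hy : y ∈ Lattice d A) :
    x + y ∈ Lattice d A := by
  obtain ⟨z, rfl⟩ := hx
  obtain ⟨w, rfl⟩ := hy
  exact ⟨z + w, latticePt_add z w⟩

lemma exists_norm_mulVec_le (A : Matrix (Fin d) (Fin d) ℝ) :
    ∃ M, 0 < M ∧ ∀ y, ‖A.mulVec y‖ ≤ M * ‖y‖ :=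
  (Matrix.mulVecLin A).toContinuousLinearMap.bound

lemma exists_norm_le_mul_norm_mulVec (hA : IsUnit A.det) :
    ∃ M, 0 < M ∧ ∀ y, ‖y‖ ≤ M * ‖A.mulVec y‖ := by
  obtain ⟨M, hM, hbound⟩ := exists_norm_mulVec_le A⁻¹
  refine ⟨M, hM, fun y ↦ ?_⟩
  simpa [Matrix.mulVec_mulVec, Matrix.nonsing_inv_mul A hA] using hbound (A.mulVec y)

lemma exists_finset_latticePt_norm_le (hA : IsUnit A.det) :
    ∃ C, ∀ r, 1 ≤ r → ∃ s : Finset (Fin d → ℤ),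
      (s.card : ℝ) ≤ C * r ^ d ∧ ∀ z, ‖latticePt d A z‖ ≤ r → z ∈ s := by
  obtain ⟨M, hM, hbound⟩ := exists_norm_le_mul_norm_mulVec hA
  refine ⟨(2 * M + 1) ^ d, fun r hr ↦
    ⟨Fintype.piFinset fun _ ↦ Finset.Icc (-⌊M * r⌋) ⌊M * r⌋, ?_, fun z hz ↦ ?_⟩⟩
  · have hfloor : 0 ≤ ⌊M * r⌋ := Int.floor_nonneg.2 (by positivity)
    have hcard : ((Finset.Icc (-⌊M * r⌋) ⌊M * r⌋).card : ℝ) ≤ (2 * M + 1) * r := by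
      have h : ((Finset.Icc (-⌊M * r⌋) ⌊M * r⌋).card : ℤ) = 2 * ⌊M * r⌋ + 1 := by
        rw [Int.card_Icc]; omega
      have h' : ((Finset.Icc (-⌊M * r⌋) ⌊M * r⌋).card : ℝ) = 2 * ⌊M * r⌋ + 1 := by exact_mod_cast h
      rw [h']
      linarith [Int.floor_le (M * r)]
    rw [Fintype.card_piFinset, Finset.prod_const, Finset.card_fin, Nat.cast_pow, ← mul_pow]
    gcongr
  · simp only [Fintype.mem_piFinset, Finset.mem_Icc]
    intro i
    have hi : |(z i : ℝ)| ≤ M * r := calc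
      |(z i : ℝ)| ≤ ‖fun i ↦ (z i : ℝ)‖ := norm_le_pi_norm (fun i ↦ (z i : ℝ)) i
      _ ≤ M * ‖latticePt d A z‖ := hbound _
      _ ≤ M * r := by gcongr
    have hi' := abs_le.1 hi
    exact ⟨neg_le.1 (Int.le_floor.2 (by push_cast; linarith)), Int.le_floor.2 hi'.2⟩

lemma finite_setOf_norm_latticePt_le (hA : IsUnit A.det) (r : ℝ) :
    {z | ‖latticePt d A z‖ ≤ r}.Finite := by
  obtain ⟨C, hC⟩ := exists_finset_latticePt_norm_le hA
  obtain ⟨s, -, hs⟩ := hC (max r 1) (le_max_right _ _)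
  exact s.finite_toSet.subset fun z hz ↦ hs z (le_trans hz (le_max_left _ _))

lemma summable_of_latticePt_support (hA : IsUnit A.det) {M : Type*} [AddCommGroup M]
    [TopologicalSpace M] {f : (Fin d → ℤ) → M} {r : ℝ}
    (hf : ∀ z, r < ‖latticePt d A z‖ → f z = 0) : Summable f :=
  summable_of_hasFiniteSupport <| (finite_setOf_norm_latticePt_le hA r).subset fun z hz ↦
    not_lt.1 fun h ↦ hz (hf z h)

/-- A ball of radius `O(R)` holds `O(R ^ d)` lattice points. -/
lemma tendsto_tsum_latticePt_zero (hA : IsUnit A.det) {f : ℝ → (Fin d → ℤ) → ℝ} {K m : ℝ}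
    (hm : 1 ≤ m) (hf : ∀ᶠ R in atTop, ∀ z, |f R z| ≤ K * R⁻¹ ^ (d + 1))
    (hsupp : ∀ᶠ R in atTop, ∀ z, m * R < ‖latticePt d A z‖ → f R z = 0) :
    Tendsto (fun R ↦ ∑' z, f R z) atTop (𝓝 0) := by
  obtain ⟨C, hC⟩ := exists_finset_latticePt_norm_le hA
  have hlim : Tendsto (fun R : ℝ ↦ C * m ^ d * |K| * R⁻¹) atTop (𝓝 0) := by
    simpa only [mul_zero] using tendsto_inv_atTop_zero.const_mul (C * m ^ d * |K|)
  refine squeeze_zero_norm' ?_ hlim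
  filter_upwards [hf, hsupp, eventually_ge_atTop 1] with R hfR hsuppR hR
  obtain ⟨s, hcard, hs⟩ := hC (m * R) (one_le_mul_of_one_le_of_one_le hm hR)
  have hbound : ∀ z ∈ s, ‖f R z‖ ≤ |K| * R⁻¹ ^ (d + 1) := fun z _ ↦
    (hfR z).trans (by gcongr; exact le_abs_self K)
  calc ‖∑' z, f R z‖
      = ‖∑ z ∈ s, f R z‖ := by
        rw [tsum_eq_sum fun z hz ↦ hsuppR z (not_le.1 fun h ↦ hz (hs z h))]
    _ ≤ s.card • (|K| * R⁻¹ ^ (d + 1)) :=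
        (norm_sum_le _ _).trans (Finset.sum_le_card_nsmul _ _ _ hbound)
    _ ≤ C * (m * R) ^ d * (|K| * R⁻¹ ^ (d + 1)) := by rw [nsmul_eq_mul]; gcongr
    _ = C * m ^ d * |K| * R⁻¹ := by rw [inv_pow]; field_simp; ring

lemma tsum_mul_bond_differences (hA : IsUnit A.det) {ι : Type*} [Fintype ι] {ρ : ι → Vec d}
    (hρ : ∀ i, ρ i ∈ Lattice d A) {φ : Vec d → ℝ} {r : ℝ} (hφ : ∀ x, r < ‖x‖ → φ x = 0)
    (w : Vec d → ι → ℝ) :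
    ∑' z, φ (latticePt d A z) * ∑ i, (w (latticePt d A z - ρ i) i - w (latticePt d A z) i) =
      ∑' z, ∑ i, w (latticePt d A z) i * (φ (latticePt d A z + ρ i) - φ (latticePt d A z)) := by
  have hsum : ∀ f : Vec d → ℝ,
      Summable fun z ↦ φ (latticePt d A z) * f (latticePt d A z) := fun f ↦
    summable_of_latticePt_support hA fun z hz ↦ by rw [hφ _ hz, zero_mul]
  have hshift : ∀ i, HasSum (fun z ↦ w (latticePt d A z) i * φ (latticePt d A z + ρ i))
      (∑' z, φ (latticePt d A z) * w (latticePt d A z - ρ i) i) := fun i ↦ by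
    obtain ⟨y, hy⟩ := hρ i
    refine ((Equiv.addRight y).hasSum_iff.2 (hsum fun x ↦ w (x - ρ i) i).hasSum).congr_fun
      fun z ↦ ?_
    simp only [Function.comp_apply, Equiv.coe_addRight, latticePt_add, hy, add_sub_cancel_right,
      mul_comm]
  have hleft : HasSum
      (fun z ↦ φ (latticePt d A z) * ∑ i, (w (latticePt d A z - ρ i) i - w (latticePt d A z) i))
      (∑ i, (∑' z, φ (latticePt d A z) * w (latticePt d A z - ρ i) i -
        ∑' z, φ (latticePt d A z) * w (latticePt d A z) i)) := by
    simp_rw [Finset.mul_sum, mul_sub]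
    exact hasSum_sum fun i _ ↦ (hsum fun x ↦ w (x - ρ i) i).hasSum.sub (hsum (w · i)).hasSum
  rw [hleft.tsum_eq]
  refine (HasSum.tsum_eq <| hasSum_sum fun i _ ↦ ?_).symm
  exact ((hshift i).sub (hsum (w · i)).hasSum).congr_fun fun z ↦ by ring

end LatticeSums

section RiemannSums

variable {d : ℕ} {A : Matrix (Fin d) (Fin d) ℝ}

/-- The half-open unit cube with lower corner `z`. -/
def unitCell (z : Fin d → ℤ) : Set (Vec d) := Set.univ.pi fun i ↦ Set.Ico (z i : ℝ) (z i + 1)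

lemma mem_unitCell_iff {z : Fin d → ℤ} {y : Vec d} : y ∈ unitCell z ↔ (fun i ↦ ⌊y i⌋) = z := by
  simp only [unitCell, Set.mem_univ_pi, Set.mem_Ico, ← Int.floor_eq_iff, funext_iff]

lemma measurableSet_unitCell (z : Fin d → ℤ) : MeasurableSet (unitCell z) :=
  MeasurableSet.univ_pi fun _ ↦ measurableSet_Ico

lemma volume_unitCell (z : Fin d → ℤ) : volume (unitCell z) = 1 := by
  simp [unitCell, Real.volume_pi_Ico]

lemma norm_sub_le_one_of_mem_unitCell {z : Fin d → ℤ} {y : Vec d} (hy : y ∈ unitCell z) :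
    ‖(fun i ↦ (z i : ℝ)) - y‖ ≤ 1 :=
  (pi_norm_le_iff_of_nonneg zero_le_one).2 fun i ↦ abs_le.2
    ⟨by have := (hy i trivial).2; simp only [Pi.sub_apply]; linarith,
      by have := (hy i trivial).1; simp only [Pi.sub_apply]; linarith⟩

lemma map_mulVec_volume (hA : IsUnit A.det) :
    Measure.map A.mulVec volume = ENNReal.ofReal |A.det|⁻¹ • (volume : Measure (Vec d)) := by
  rw [← abs_inv]
  exact Real.map_matrix_volume_pi_eq_smul_volume_pi hA.ne_zero

lemma continuous_mulVec (A : Matrix (Fin d) (Fin d) ℝ) : Continuous A.mulVec :=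
  (Matrix.mulVecLin A).continuous_of_finiteDimensional

lemma integrable_comp_mulVec (hA : IsUnit A.det) {G : Vec d → ℝ} (hG : Integrable G) :
    Integrable fun y ↦ G (A.mulVec y) := by
  refine Integrable.comp_aemeasurable ?_ (continuous_mulVec A).aemeasurable
  rw [map_mulVec_volume hA]
  exact hG.smul_measure ENNReal.ofReal_ne_top

lemma hasSum_setIntegral_unitCell (hA : IsUnit A.det) {G : Vec d → ℝ} (hG : Integrable G) :
    HasSum (fun z : Fin d → ℤ ↦ ∫ y in unitCell z, G (A.mulVec y)) (|A.det|⁻¹ * ∫ x, G x) := by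
  have hint : ∫ y, G (A.mulVec y) = |A.det|⁻¹ * ∫ x, G x := by
    have hmeas : AEStronglyMeasurable G (Measure.map A.mulVec volume) := by
      rw [map_mulVec_volume hA]
      exact hG.aestronglyMeasurable.smul_measure _
    rw [← integral_map (continuous_mulVec A).aemeasurable hmeas, map_mulVec_volume hA,
      integral_smul_measure, ENNReal.toReal_ofReal (by positivity), smul_eq_mul]
  have hdisj : Pairwise (Function.onFun Disjoint (unitCell (d := d))) := fun z w hzw ↦
    Set.disjoint_left.2 fun y hz hw ↦
      hzw <| (mem_unitCell_iff.1 hz).symm.trans (mem_unitCell_iff.1 hw)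
  have hunion : ⋃ z, unitCell (d := d) z = Set.univ :=
    Set.eq_univ_of_forall fun y ↦ Set.mem_iUnion.2 ⟨_, mem_unitCell_iff.2 rfl⟩
  have hsum := hasSum_integral_iUnion measurableSet_unitCell hdisj
    (integrable_comp_mulVec hA hG).integrableOn
  rwa [hunion, setIntegral_univ, hint] at hsum

lemma abs_sub_setIntegral_unitCell_le {G : Vec d → ℝ} {K M : ℝ} (hK : 0 ≤ K)
    (hM : ∀ y, ‖A.mulVec y‖ ≤ M * ‖y‖) (hM₀ : 0 ≤ M)
    (hG : ∀ x y, |G x - G y| ≤ K * ‖x - y‖) (hint : Integrable fun y ↦ G (A.mulVec y))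
    (z : Fin d → ℤ) :
    |G (latticePt d A z) - ∫ y in unitCell z, G (A.mulVec y)| ≤ K * M := by
  have hfin : volume (unitCell z) ≠ ⊤ := by simp [volume_unitCell]
  have hconst : ∫ _y in unitCell z, G (latticePt d A z) = G (latticePt d A z) := by
    simp [Measure.real, volume_unitCell]
  have hconst_int : IntegrableOn (fun _ ↦ G (latticePt d A z)) (unitCell z) :=
    integrableOn_const hfin
  rw [← hconst, ← integral_sub hconst_int hint.integrableOn]
  suffices h : ∀ y ∈ unitCell z, ‖G (latticePt d A z) - G (A.mulVec y)‖ ≤ K * M by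
    simpa [Measure.real, volume_unitCell] using norm_setIntegral_le_of_norm_le_const hfin.lt_top h
  intro y hy
  refine (hG _ _).trans (mul_le_mul_of_nonneg_left ?_ hK)
  rw [latticePt_eq_mulVec, ← Matrix.mulVec_sub]
  exact (hM _).trans (mul_le_of_le_one_right hM₀ (norm_sub_le_one_of_mem_unitCell hy))

lemma setIntegral_unitCell_eq_zero {G : Vec d → ℝ} {r M : ℝ}
    (hM : ∀ y, ‖A.mulVec y‖ ≤ M * ‖y‖) (hM₀ : 0 ≤ M) (hG : ∀ x, r < ‖x‖ → G x = 0)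
    {z : Fin d → ℤ} (hz : r + M < ‖latticePt d A z‖) :
    ∫ y in unitCell z, G (A.mulVec y) = 0 := by
  refine setIntegral_eq_zero_of_forall_eq_zero fun y hy ↦ hG _ ?_
  have hdist : ‖latticePt d A z - A.mulVec y‖ ≤ M := by
    rw [latticePt_eq_mulVec, ← Matrix.mulVec_sub]
    exact (hM _).trans (mul_le_of_le_one_right hM₀ (norm_sub_le_one_of_mem_unitCell hy))
  linarith [norm_sub_norm_le (latticePt d A z) (A.mulVec y)]

lemma tendsto_riemannSum_sub_integral (hA : IsUnit A.det) {G : ℝ → Vec d → ℝ} {K m : ℝ} (hm : 1 ≤ m)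
    (hlip : ∀ᶠ R in atTop, ∀ x y, |G R x - G R y| ≤ K * R⁻¹ ^ (d + 1) * ‖x - y‖)
    (hsupp : ∀ᶠ R in atTop, ∀ x, m * R < ‖x‖ → G R x = 0) :
    Tendsto (fun R ↦ ∑' z, G R (latticePt d A z) - |A.det|⁻¹ * ∫ x, G R x) atTop (𝓝 0) := by
  obtain ⟨M, hM, hbound⟩ := exists_norm_mulVec_le A
  have hGcont : ∀ᶠ R in atTop, Continuous (G R) := by
    filter_upwards [hlip] with R hR
    exact (LipschitzWith.of_dist_le' fun x y ↦ (hR x y).trans_eq (by rw [dist_eq_norm])).continuous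
  have hGint : ∀ᶠ R in atTop, Integrable (G R) := by
    filter_upwards [hGcont, hsupp] with R hcont hsuppR
    exact hcont.integrable_of_hasCompactSupport <|
      HasCompactSupport.of_support_subset_isCompact (isCompact_closedBall 0 (m * R)) fun x hx ↦
        mem_closedBall_zero_iff.2 (not_lt.1 fun h ↦ hx (hsuppR x h))
  have hcell : ∀ᶠ R in atTop, ∀ z, |G R (latticePt d A z) - ∫ y in unitCell z, G R (A.mulVec y)| ≤
      |K| * M * R⁻¹ ^ (d + 1) := by
    filter_upwards [hlip, hGint, eventually_ge_atTop 0] with R hlipR hint hR z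
    rw [mul_right_comm]
    refine abs_sub_setIntegral_unitCell_le (by positivity) hbound hM.le (fun x y ↦
      (hlipR x y).trans ?_) (integrable_comp_mulVec hA hint) z
    gcongr
    exact le_abs_self K
  have hcell_supp : ∀ᶠ R in atTop, ∀ z, (m + M) * R < ‖latticePt d A z‖ →
      G R (latticePt d A z) - ∫ y in unitCell z, G R (A.mulVec y) = 0 := by
    filter_upwards [hsupp, eventually_ge_atTop 1] with R hsuppR hR z hz
    have hzM : m * R + M < ‖latticePt d A z‖ := by nlinarith
    rw [hsuppR _ (by linarith), setIntegral_unitCell_eq_zero hbound hM.le hsuppR hzM, sub_zero]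
  refine (tendsto_tsum_latticePt_zero hA (by linarith) hcell hcell_supp).congr' ?_
  filter_upwards [hGint, hsupp] with R hint hsuppR
  have hcells := hasSum_setIntegral_unitCell hA hint
  rw [(summable_of_latticePt_support hA fun z hz ↦ hsuppR _ hz).tsum_sub hcells.summable,
    hcells.tsum_eq]

end RiemannSums

section Taylor

open scoped Asymptotics

variable {E F : Type*} [NormedAddCommGroup E] [NormedSpace ℝ E] [NormedAddCommGroup F]
  [NormedSpace ℝ F]

lemma norm_taylor_remainder_le {f : E → F} {f' : E → E →L[ℝ] F} {s : Set E} {x y : E} {K : ℝ}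
    (hs : Convex ℝ s) (hx : x ∈ s) (hy : y ∈ s) (hf : ∀ z ∈ s, HasFDerivAt f (f' z) z)
    (hK₀ : 0 ≤ K) (hK : ∀ z ∈ s, ‖f' z - f' x‖ ≤ K * ‖z - x‖) :
    ‖f y - f x - f' x (y - x)‖ ≤ K * ‖y - x‖ ^ 2 := by
  have hball : ∀ z ∈ s ∩ Metric.closedBall x ‖y - x‖, ‖f' z - f' x‖ ≤ K * ‖y - x‖ := fun z hz ↦
    (hK z hz.1).trans (mul_le_mul_of_nonneg_left (mem_closedBall_iff_norm.1 hz.2) hK₀)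
  rw [pow_two, ← mul_assoc]
  exact (hs.inter (convex_closedBall x _)).norm_image_sub_le_of_norm_hasFDerivWithin_le'
    (fun z hz ↦ (hf z hz.1).hasFDerivWithinAt) hball
    ⟨hx, Metric.mem_closedBall_self (norm_nonneg _)⟩
    ⟨hy, mem_closedBall_iff_norm.2 le_rfl⟩

lemma isBigO_taylor_remainder {f : E → F} {x : E} (hf : ContDiffAt ℝ 2 f x) :
    (fun y ↦ f y - f x - fderiv ℝ f x (y - x)) =O[𝓝 x] fun y ↦ ‖y - x‖ ^ 2 := by
  have hf' : ContDiffAt ℝ 1 (fderiv ℝ f) x := hf.fderiv_right (by norm_num)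
  obtain ⟨K, t, ht, hlip⟩ := hf'.exists_lipschitzOnWith
  have hdiff : ∀ᶠ y in 𝓝 x, DifferentiableAt ℝ f y :=
    (hf.eventually (by simp)).mono fun y hy ↦ hy.differentiableAt two_ne_zero
  obtain ⟨r, hr, hball⟩ := Metric.eventually_nhds_iff_ball.1 (hdiff.and ht)
  refine Asymptotics.IsBigO.of_bound K ?_
  filter_upwards [Metric.ball_mem_nhds x hr] with y hy
  rw [norm_pow, norm_norm]
  refine norm_taylor_remainder_le (convex_ball x r) (Metric.mem_ball_self hr) hy
    (fun z hz ↦ (hball z hz).1.hasFDerivAt) K.coe_nonneg fun z hz ↦ ?_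
  exact hlip.norm_sub_le (hball z hz).2 (mem_of_mem_nhds ht)

end Taylor

section Decay

open Bornology
open scoped Asymptotics

variable {d : ℕ}

/-- The filter of lattice points going to infinity. -/
def latticeAtInfinity (A : Matrix (Fin d) (Fin d) ℝ) : Filter (Vec d) :=
  cobounded (Vec d) ⊓ 𝓟 (Lattice d A)

lemma latticeAtInfinity_le_cobounded (A : Matrix (Fin d) (Fin d) ℝ) :
    latticeAtInfinity A ≤ cobounded (Vec d) := inf_le_left

lemma eventually_mem_Lattice (A : Matrix (Fin d) (Fin d) ℝ) :
    ∀ᶠ l in latticeAtInfinity A, l ∈ Lattice d A := mem_inf_of_right (mem_principal_self _)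

lemma tendsto_inv_norm_cobounded (E : Type*) [SeminormedAddCommGroup E] :
    Tendsto (fun x : E ↦ ‖x‖⁻¹) (cobounded E) (𝓝 0) :=
  tendsto_norm_cobounded_atTop.inv_tendsto_atTop

lemma isBigO_inv_norm_sq_inv_norm (E : Type*) [SeminormedAddCommGroup E] :
    (fun x : E ↦ ‖x‖⁻¹ ^ 2) =O[cobounded E] fun x ↦ ‖x‖⁻¹ := by
  simpa only [pow_two, one_mul] using
    ((tendsto_inv_norm_cobounded E).isBigO_one ℝ).mul
      (Asymptotics.isBigO_refl (fun x : E ↦ ‖x‖⁻¹) _)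

lemma exists_norm_le_of_isBigO_cobounded {E F : Type*} [SeminormedAddCommGroup E]
    [SeminormedAddCommGroup F] {f : E → F} {s : Set E} {k : ℕ}
    (hf : f =O[cobounded E ⊓ 𝓟 s] fun x ↦ ‖x‖⁻¹ ^ k) {ε : ℝ} (hε : 0 < ε) :
    ∃ C, 0 ≤ C ∧ ∀ᶠ R in atTop, ∀ x ∈ s, ε * R ≤ ‖x‖ → ‖f x‖ ≤ C * R⁻¹ ^ k := by
  obtain ⟨c, hc, hcf⟩ := hf.exists_pos
  obtain ⟨r, -, hr⟩ := (Filter.hasBasis_cobounded_norm.inf_principal s).eventually_iff.1 hcf.bound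
  refine ⟨c * ε⁻¹ ^ k, by positivity, ?_⟩
  filter_upwards [eventually_gt_atTop 0, eventually_ge_atTop (r / ε)] with R hR hrR x hxs hx
  have hrx : r ≤ ‖x‖ := ((div_le_iff₀' hε).1 hrR).trans hx
  calc ‖f x‖ ≤ c * ‖‖x‖⁻¹ ^ k‖ := hr ⟨hrx, hxs⟩
    _ = c * ‖x‖⁻¹ ^ k := by rw [Real.norm_of_nonneg (by positivity)]
    _ ≤ c * (ε * R)⁻¹ ^ k := by gcongr
    _ = c * ε⁻¹ ^ k * R⁻¹ ^ k := by rw [mul_inv, mul_pow, mul_assoc]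

end Decay

section Cutoff

variable {d : ℕ} {η : Vec d → ℝ}

/-- A `C²` cutoff function for the sup norm of `Vec d`. In two dimensions a Euclidean cutoff, equal
to `1` on the unit disc and to `0` off the disc of radius `2`, is one of these. -/
structure IsCutoff (η : Vec d → ℝ) : Prop where
  contDiff : ContDiff ℝ 2 η
  eq_one : ∀ x, ‖x‖ ≤ 1 / 2 → η x = 1
  eq_zero : ∀ x, 2 ≤ ‖x‖ → η x = 0

/-- The dilation `x ↦ η (x / R)` of a cutoff function. -/
def dilate (η : Vec d → ℝ) (R : ℝ) (x : Vec d) : ℝ := η (R⁻¹ • x)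

lemma fderiv_dilate (η : Vec d → ℝ) (R : ℝ) (x : Vec d) :
    fderiv ℝ (dilate η R) x = R⁻¹ • fderiv ℝ η (R⁻¹ • x) :=
  fderiv_comp_smul _

lemma fderiv_fderiv_dilate (hη : ContDiff ℝ 2 η) (R : ℝ) (x : Vec d) :
    fderiv ℝ (fderiv ℝ (dilate η R)) x = R⁻¹ • R⁻¹ • fderiv ℝ (fderiv ℝ η) (R⁻¹ • x) := by
  have hdiff : Differentiable ℝ (fderiv ℝ η) :=
    (hη.fderiv_right (m := 1) (by norm_num)).differentiable one_ne_zero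
  rw [funext (fderiv_dilate η R), ← fderiv_comp_smul]
  exact fderiv_fun_const_smul ((hdiff _).comp x (differentiable_id.const_smul R⁻¹ x)) _

namespace IsCutoff

lemma contDiff_dilate (hη : IsCutoff η) (R : ℝ) : ContDiff ℝ 2 (dilate η R) :=
  hη.contDiff.comp (contDiff_const_smul R⁻¹)

lemma dilate_eq_one (hη : IsCutoff η) {R : ℝ} (hR : 0 < R) {x : Vec d} (hx : ‖x‖ ≤ R / 2) :
    dilate η R x = 1 := by
  refine hη.eq_one _ ?_
  rw [norm_smul, norm_inv, Real.norm_of_nonneg hR.le, inv_mul_le_iff₀ hR]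
  linarith

lemma dilate_eq_zero (hη : IsCutoff η) {R : ℝ} (hR : 0 < R) {x : Vec d} (hx : 2 * R ≤ ‖x‖) :
    dilate η R x = 0 := by
  refine hη.eq_zero _ ?_
  rw [norm_smul, norm_inv, Real.norm_of_nonneg hR.le, le_inv_mul_iff₀ hR]
  linarith

lemma eventuallyEq_dilate_one (hη : IsCutoff η) {R : ℝ} (hR : 0 < R) {x : Vec d}
    (hx : ‖x‖ < R / 2) : dilate η R =ᶠ[𝓝 x] fun _ ↦ 1 := by
  filter_upwards [continuous_norm.continuousAt.eventually (gt_mem_nhds hx)] with y hy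
    using hη.dilate_eq_one hR hy.le

lemma eventuallyEq_dilate_zero (hη : IsCutoff η) {R : ℝ} (hR : 0 < R) {x : Vec d}
    (hx : 2 * R < ‖x‖) : dilate η R =ᶠ[𝓝 x] fun _ ↦ 0 := by
  filter_upwards [continuous_norm.continuousAt.eventually (lt_mem_nhds hx)] with y hy
    using hη.dilate_eq_zero hR hy.le

lemma fderiv_dilate_eq_zero (hη : IsCutoff η) {R : ℝ} (hR : 0 < R) {x : Vec d}
    (hx : ‖x‖ < R / 2 ∨ 2 * R < ‖x‖) : fderiv ℝ (dilate η R) x = 0 := by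
  rcases hx with hx | hx
  · simp [(hη.eventuallyEq_dilate_one hR hx).fderiv_eq]
  · simp [(hη.eventuallyEq_dilate_zero hR hx).fderiv_eq]

lemma hasCompactSupport (hη : IsCutoff η) : HasCompactSupport η :=
  HasCompactSupport.of_support_subset_isCompact (isCompact_closedBall 0 2) fun x hx ↦
    mem_closedBall_zero_iff.2 (not_lt.1 fun h ↦ hx (hη.eq_zero x h.le))

set_option maxSynthPendingDepth 3 in
lemma exists_norm_fderiv_dilate_le (hη : IsCutoff η) :
    ∃ L, 0 ≤ L ∧ ∀ R, 0 < R → ∀ x, ‖fderiv ℝ (dilate η R) x‖ ≤ L * R⁻¹ ∧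
      ‖fderiv ℝ (fderiv ℝ (dilate η R)) x‖ ≤ L * R⁻¹ ^ 2 := by
  have hfderiv : ContDiff ℝ 1 (fderiv ℝ η) := hη.contDiff.fderiv_right (by norm_num)
  have hsupp := hη.hasCompactSupport.fderiv ℝ
  obtain ⟨L₁, hL₁⟩ := hfderiv.continuous.bounded_above_of_compact_support hsupp
  obtain ⟨L₂, hL₂⟩ :=
    (hfderiv.continuous_fderiv one_ne_zero).bounded_above_of_compact_support (hsupp.fderiv ℝ)
  refine ⟨max L₁ L₂, (norm_nonneg _).trans ((hL₁ 0).trans (le_max_left _ _)), fun R hR x ↦ ?_⟩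
  have hR' : 0 ≤ R⁻¹ := inv_nonneg.2 hR.le
  constructor
  · rw [fderiv_dilate, norm_smul, Real.norm_of_nonneg hR', mul_comm]
    gcongr
    exact (hL₁ _).trans (le_max_left _ _)
  · rw [fderiv_fderiv_dilate hη.contDiff, norm_smul, norm_smul, Real.norm_of_nonneg hR',
      ← mul_assoc, ← pow_two, mul_comm]
    gcongr
    exact (hL₂ _).trans (le_max_right _ _)

lemma differentiable_fderiv_dilate (hη : IsCutoff η) (R : ℝ) :
    Differentiable ℝ (fderiv ℝ (dilate η R)) :=
  ((hη.contDiff_dilate R).fderiv_right (m := 1) (by norm_num)).differentiable one_ne_zero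

lemma hasFDerivAt_dilate (hη : IsCutoff η) (R : ℝ) (x : Vec d) :
    HasFDerivAt (dilate η R) (fderiv ℝ (dilate η R) x) x :=
  ((hη.contDiff_dilate R).differentiable two_ne_zero x).hasFDerivAt

lemma exists_abs_dilate_taylor_le (hη : IsCutoff η) :
    ∃ L, 0 ≤ L ∧ ∀ R, 0 < R → ∀ x h,
      |dilate η R (x + h) - dilate η R x - fderiv ℝ (dilate η R) x h| ≤ L * R⁻¹ ^ 2 * ‖h‖ ^ 2 := by
  obtain ⟨L, hL₀, hL⟩ := hη.exists_norm_fderiv_dilate_le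
  refine ⟨L, hL₀, fun R hR x h ↦ ?_⟩
  have hlip : ∀ z ∈ Set.univ,
      ‖fderiv ℝ (dilate η R) z - fderiv ℝ (dilate η R) x‖ ≤ L * R⁻¹ ^ 2 * ‖z - x‖ := fun z _ ↦
    convex_univ.norm_image_sub_le_of_norm_fderiv_le
      (fun y _ ↦ hη.differentiable_fderiv_dilate R y) (fun y _ ↦ (hL R hR y).2) trivial trivial
  simpa only [add_sub_cancel_left, Real.norm_eq_abs] using
    norm_taylor_remainder_le (y := x + h) convex_univ trivial trivial
      (fun z _ ↦ hη.hasFDerivAt_dilate R z) (by positivity) hlip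

end IsCutoff

end Cutoff

section FluxLimit

open Bornology
open scoped Asymptotics

variable {d : ℕ} {A : Matrix (Fin (d + 1)) (Fin (d + 1)) ℝ} {ι : Type*} [Fintype ι]
  {ρ : ι → Vec (d + 1)} {w : Vec (d + 1) → ι → ℝ} {S T : Vec (d + 1) → Vec (d + 1)}
  {η : Vec (d + 1) → ℝ}

lemma IsCutoff.dilate_taylor_remainder_eq_zero (hη : IsCutoff η) {R : ℝ} (hR : 0 < R)
    {x h : Vec (d + 1)} (hh : ‖h‖ ≤ R / 4) (hx : ‖x‖ < R / 4 ∨ 3 * R < ‖x‖) :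
    dilate η R (x + h) - dilate η R x - fderiv ℝ (dilate η R) x h = 0 := by
  rcases hx with hx | hx
  · rw [hη.dilate_eq_one hR ((norm_add_le x h).trans (by linarith)),
      hη.dilate_eq_one hR (by linarith), hη.fderiv_dilate_eq_zero hR (.inl (by linarith)),
      sub_self, zero_apply, sub_zero]
  · have hxh : ‖x‖ - ‖h‖ ≤ ‖x + h‖ := by simpa using norm_sub_norm_le x (-h)
    rw [hη.dilate_eq_zero hR (by linarith), hη.dilate_eq_zero hR (by linarith),
      hη.fderiv_dilate_eq_zero hR (.inr (by linarith)), sub_self,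
      zero_apply, sub_zero]

lemma tendsto_tsum_bond_taylor_remainder (hA : IsUnit A.det) (hη : IsCutoff η)
    (ρ : ι → Vec (d + 1)) (hw : w =O[latticeAtInfinity A] fun l ↦ ‖l‖⁻¹ ^ d) :
    Tendsto (fun R ↦ ∑' z, ∑ i, w (latticePt _ A z) i *
      (dilate η R (latticePt _ A z + ρ i) - dilate η R (latticePt _ A z) -
        fderiv ℝ (dilate η R) (latticePt _ A z) (ρ i))) atTop (𝓝 0) := by
  obtain ⟨C, hC₀, hC⟩ := exists_norm_le_of_isBigO_cobounded hw (ε := 1 / 4) (by norm_num)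
  obtain ⟨L, hL₀, hL⟩ := hη.exists_abs_dilate_taylor_le
  have hshort : ∀ᶠ R : ℝ in atTop, 0 < R ∧ ∀ i, ‖ρ i‖ ≤ R / 4 :=
    (eventually_gt_atTop 0).and <| eventually_all.2 fun i ↦
      (eventually_ge_atTop (4 * ‖ρ i‖)).mono fun R hR ↦ by linarith
  have hzero : ∀ᶠ R : ℝ in atTop, ∀ x : Vec (d + 1), ‖x‖ < R / 4 ∨ 3 * R < ‖x‖ → ∑ i, w x i *
      (dilate η R (x + ρ i) - dilate η R x - fderiv ℝ (dilate η R) x (ρ i)) = 0 := by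
    filter_upwards [hshort] with R hR x hx
    exact Finset.sum_eq_zero fun i _ ↦ by
      rw [hη.dilate_taylor_remainder_eq_zero hR.1 (hR.2 i) hx, mul_zero]
  refine tendsto_tsum_latticePt_zero hA (m := 3) (K := C * L * ∑ i, ‖ρ i‖ ^ 2) (by norm_num) ?_
    (hzero.mono fun R hR z hz ↦ hR _ (.inr hz))
  filter_upwards [hC, hshort, hzero] with R hCR hR hzeroR z
  have hR₀ := hR.1
  rcases lt_or_ge ‖latticePt _ A z‖ (R / 4) with hz | hz
  · rw [hzeroR _ (.inl hz), abs_zero]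
    positivity
  have hwz : ‖w (latticePt _ A z)‖ ≤ C * R⁻¹ ^ d := hCR _ ⟨z, rfl⟩ (by linarith)
  calc _ ≤ ∑ i, C * R⁻¹ ^ d * (L * R⁻¹ ^ 2 * ‖ρ i‖ ^ 2) := by
        refine (Finset.abs_sum_le_sum_abs _ _).trans (Finset.sum_le_sum fun i _ ↦ ?_)
        rw [abs_mul]
        gcongr
        exacts [(norm_le_pi_norm (w _) i).trans hwz, hL R hR₀ _ _]
    _ = C * L * (∑ i, ‖ρ i‖ ^ 2) * R⁻¹ ^ (d + 1 + 1) := by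
        simp only [Finset.mul_sum, Finset.sum_mul]
        exact Finset.sum_congr rfl fun i _ ↦ by ring

lemma tendsto_tsum_fderiv_dilate_apply (hA : IsUnit A.det) (hη : IsCutoff η)
    (hT : T =O[latticeAtInfinity A] fun l ↦ ‖l‖⁻¹ ^ (d + 1)) :
    Tendsto (fun R ↦ ∑' z, fderiv ℝ (dilate η R) (latticePt _ A z) (T (latticePt _ A z))) atTop
      (𝓝 0) := by
  obtain ⟨C, hC₀, hC⟩ := exists_norm_le_of_isBigO_cobounded hT (ε := 1 / 2) (by norm_num)
  obtain ⟨L, hL₀, hL⟩ := hη.exists_norm_fderiv_dilate_le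
  have hzero : ∀ᶠ R : ℝ in atTop, ∀ x v, ‖x‖ < R / 2 ∨ 2 * R < ‖x‖ →
      fderiv ℝ (dilate η R) x v = 0 := by
    filter_upwards [eventually_gt_atTop 0] with R hR x v hx
    rw [hη.fderiv_dilate_eq_zero hR hx, zero_apply]
  refine tendsto_tsum_latticePt_zero hA (m := 2) (K := L * C) (by norm_num) ?_
    (hzero.mono fun R hR z hz ↦ hR _ _ (.inr hz))
  filter_upwards [hC, hzero, eventually_gt_atTop 0] with R hCR hzeroR hR z
  rcases lt_or_ge ‖latticePt _ A z‖ (R / 2) with hz | hz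
  · rw [hzeroR _ _ (.inl hz), abs_zero]
    positivity
  calc _ ≤ ‖fderiv ℝ (dilate η R) (latticePt _ A z)‖ * ‖T (latticePt _ A z)‖ :=
        ContinuousLinearMap.le_opNorm _ _
    _ ≤ L * R⁻¹ * (C * R⁻¹ ^ (d + 1)) := by
        gcongr
        exacts [(hL R hR _).1, hCR _ ⟨z, rfl⟩ (by linarith)]
    _ = L * C * R⁻¹ ^ (d + 1 + 1) := by ring

lemma exists_lipschitz_fderiv_dilate_apply (hη : IsCutoff η)
    (hdiff : ∀ᶠ x in cobounded _, DifferentiableAt ℝ S x)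
    (hS : S =O[cobounded _] fun x ↦ ‖x‖⁻¹ ^ d)
    (hDS : fderiv ℝ S =O[cobounded _] fun x ↦ ‖x‖⁻¹ ^ (d + 1)) :
    ∃ K, ∀ᶠ R in atTop, ∀ x y, |fderiv ℝ (dilate η R) x (S x) - fderiv ℝ (dilate η R) y (S y)| ≤
      K * R⁻¹ ^ (d + 1 + 1) * ‖x - y‖ := by
  rw [← inf_top_eq (cobounded _), ← principal_univ] at hS hDS
  obtain ⟨C, hC₀, hC⟩ := exists_norm_le_of_isBigO_cobounded hS one_half_pos
  obtain ⟨C', hC'₀, hC'⟩ := exists_norm_le_of_isBigO_cobounded hDS one_half_pos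
  obtain ⟨L, hL₀, hL⟩ := hη.exists_norm_fderiv_dilate_le
  obtain ⟨r, -, hr⟩ := hasBasis_cobounded_norm.eventually_iff.1 hdiff
  refine ⟨L * C' + L * C, ?_⟩
  filter_upwards [hC, hC', eventually_gt_atTop 0, eventually_ge_atTop (2 * r)]
    with R hCR hCR' hR hrR
  have hderiv : ∀ x, ∃ E', HasFDerivAt (fun x ↦ fderiv ℝ (dilate η R) x (S x)) E' x ∧
      ‖E'‖ ≤ (L * C' + L * C) * R⁻¹ ^ (d + 1 + 1) := fun x ↦ by
    rcases lt_or_ge ‖x‖ (R / 2) with hx | hx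
    · refine ⟨0, (hasFDerivAt_const 0 x).congr_of_eventuallyEq ?_,
        (norm_zero (E := Vec (d + 1) →L[ℝ] ℝ)).trans_le (by positivity)⟩
      filter_upwards [continuous_norm.continuousAt.eventually (gt_mem_nhds hx)] with y hy
      rw [hη.fderiv_dilate_eq_zero hR (.inl hy), zero_apply]
    · refine ⟨_, (hη.differentiable_fderiv_dilate R x).hasFDerivAt.clm_apply
        (hr (show r ≤ ‖x‖ by linarith)).hasFDerivAt, ?_⟩
      calc _ ≤ L * R⁻¹ * (C' * R⁻¹ ^ (d + 1)) + L * R⁻¹ ^ 2 * (C * R⁻¹ ^ d) := by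
            refine (norm_add_le _ _).trans (add_le_add ?_ ?_)
            · refine (ContinuousLinearMap.opNorm_comp_le _ _).trans ?_
              gcongr
              exacts [(hL R hR x).1, hCR' x trivial (by linarith)]
            · refine (ContinuousLinearMap.le_opNorm _ _).trans ?_
              rw [ContinuousLinearMap.opNorm_flip]
              gcongr
              exacts [(hL R hR x).2, hCR x trivial (by linarith)]
        _ = (L * C' + L * C) * R⁻¹ ^ (d + 1 + 1) := by ring
  choose E' hE' hbound using hderiv
  exact fun x y ↦ convex_univ.norm_image_sub_le_of_norm_hasFDerivWithin_le
    (fun z _ ↦ (hE' z).hasFDerivWithinAt) (fun z _ ↦ hbound z) trivial trivial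

lemma tendsto_riemannSum_fderiv_dilate_sub_integral (hA : IsUnit A.det) (hη : IsCutoff η)
    (hdiff : ∀ᶠ x in cobounded _, DifferentiableAt ℝ S x)
    (hS : S =O[cobounded _] fun x ↦ ‖x‖⁻¹ ^ d)
    (hDS : fderiv ℝ S =O[cobounded _] fun x ↦ ‖x‖⁻¹ ^ (d + 1)) :
    Tendsto (fun R ↦ |A.det| * ∑' z, fderiv ℝ (dilate η R) (latticePt _ A z) (S (latticePt _ A z)) -
      ∫ x, fderiv ℝ (dilate η R) x (S x)) atTop (𝓝 0) := by
  obtain ⟨K, hK⟩ := exists_lipschitz_fderiv_dilate_apply hη hdiff hS hDS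
  have hlim := tendsto_riemannSum_sub_integral hA (m := 2) (by norm_num) hK <|
    (eventually_gt_atTop 0).mono fun R hR x hx ↦ by
      rw [hη.fderiv_dilate_eq_zero hR (.inr hx), zero_apply]
  have hdet : |A.det| ≠ 0 := abs_ne_zero.2 hA.ne_zero
  simpa only [mul_zero, mul_sub, mul_inv_cancel_left₀ hdet] using hlim.const_mul |A.det|

theorem tendsto_tsum_dilate_mul_bond_differences (hA : IsUnit A.det) (hη : IsCutoff η)
    (hρ : ∀ i, ρ i ∈ Lattice _ A) (hw : w =O[latticeAtInfinity A] fun l ↦ ‖l‖⁻¹ ^ d)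
    (hmoment : (fun l ↦ ∑ i, w l i • ρ i - |A.det| • S l) =O[latticeAtInfinity A]
      fun l ↦ ‖l‖⁻¹ ^ (d + 1))
    (hdiff : ∀ᶠ x in cobounded _, DifferentiableAt ℝ S x)
    (hS : S =O[cobounded _] fun x ↦ ‖x‖⁻¹ ^ d)
    (hDS : fderiv ℝ S =O[cobounded _] fun x ↦ ‖x‖⁻¹ ^ (d + 1)) :
    Tendsto (fun R ↦ ∑' z, dilate η R (latticePt _ A z) *
        ∑ i, (w (latticePt _ A z - ρ i) i - w (latticePt _ A z) i) -
      ∫ x, fderiv ℝ (dilate η R) x (S x)) atTop (𝓝 0) := by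
  have hlim := ((tendsto_tsum_bond_taylor_remainder hA hη ρ hw).add
    (tendsto_tsum_fderiv_dilate_apply hA hη hmoment)).add
      (tendsto_riemannSum_fderiv_dilate_sub_integral hA hη hdiff hS hDS)
  rw [add_zero, add_zero] at hlim
  refine hlim.congr' ?_
  filter_upwards [eventually_gt_atTop 0, eventually_all.2 fun i ↦ eventually_ge_atTop (4 * ‖ρ i‖)]
    with R hR hρR
  have hsummable : ∀ V : Vec (d + 1) → Vec (d + 1), Summable fun z ↦
      fderiv ℝ (dilate η R) (latticePt _ A z) (V (latticePt _ A z)) := fun V ↦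
    summable_of_latticePt_support hA (r := 2 * R) fun z hz ↦ by
      rw [hη.fderiv_dilate_eq_zero hR (.inr hz), zero_apply]
  have hmoments : Summable fun z ↦ fderiv ℝ (dilate η R) (latticePt _ A z)
      (∑ i, w (latticePt _ A z) i • ρ i - |A.det| • S (latticePt _ A z)) :=
    hsummable fun l ↦ ∑ i, w l i • ρ i - |A.det| • S l
  have hremainders := summable_of_latticePt_support hA (r := 3 * R) (f := fun z ↦
      ∑ i, w (latticePt _ A z) i * (dilate η R (latticePt _ A z + ρ i) -
        dilate η R (latticePt _ A z) - fderiv ℝ (dilate η R) (latticePt _ A z) (ρ i)))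
    fun z hz ↦ Finset.sum_eq_zero fun i _ ↦ by
      rw [hη.dilate_taylor_remainder_eq_zero hR (by linarith [hρR i]) (.inr hz), mul_zero]
  rw [tsum_mul_bond_differences hA hρ (r := 2 * R) (fun x hx ↦ hη.dilate_eq_zero hR hx.le),
    ← hremainders.tsum_add hmoments, ← tsum_mul_left, ← add_sub_assoc,
    ← (hremainders.add hmoments).tsum_add ((hsummable S).mul_left _)]
  congr 1
  refine tsum_congr fun z ↦ ?_
  simp only [map_sub, map_sum, map_smul, smul_eq_mul, mul_sub, Finset.sum_sub_distrib]
  ring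

lemma divergence_smul {n : ℕ} {φ : Vec n → ℝ} {X : Vec n → Vec n} {x : Vec n}
    (hφ : DifferentiableAt ℝ φ x) (hX : DifferentiableAt ℝ X x) :
    divergence (fun y ↦ φ y • X y) x = fderiv ℝ φ x (X x) + φ x * divergence X x := by
  have hcoord : fderiv ℝ φ x (X x) = ∑ a, X x a * fderiv ℝ φ x (Pi.single a 1) := by
    conv_lhs => rw [pi_eq_sum_univ' (X x), map_sum]
    simp only [map_smul, smul_eq_mul]
  rw [divergence, fderiv_fun_smul hφ hX, hcoord, divergence, Finset.mul_sum,
    ← Finset.sum_add_distrib]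
  refine Finset.sum_congr rfl fun a _ ↦ ?_
  simp only [add_apply, smul_apply, Pi.add_apply, Pi.smul_apply,
    ContinuousLinearMap.smulRight_apply, smul_eq_mul]
  ring

end FluxLimit

section CircleFlux

open Bornology
open scoped Asymptotics

variable {A : Matrix (Fin 2) (Fin 2) ℝ} {S : Vec 2 → Vec 2} {x₀ : Vec 2} {η : Vec 2 → ℝ}

lemma integral_fderiv_dilate_apply_eq_neg_unitCircleFlux (hη : IsCutoff η)
    (hS : ContDiffOn ℝ 1 S {x | x ≠ x₀}) (hdiv : ∀ x, x ≠ x₀ → divergence S x = 0) {R : ℝ}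
    (hR : 2 * (‖x₀‖ + 1) < R) :
    ∫ x, fderiv ℝ (dilate η R) x (S x) = -unitCircleFlux S x₀ := by
  have hR₀ : 0 < R := by linarith [norm_nonneg x₀]
  have hSdiff : ∀ x, x ≠ x₀ → DifferentiableAt ℝ S x := fun x hx ↦
    (hS.differentiableOn one_ne_zero x hx).differentiableAt (isOpen_ne.mem_nhds hx)
  have hdivX : ∀ x, x ≠ x₀ →
      divergence (fun y ↦ dilate η R y • S y) x = fderiv ℝ (dilate η R) x (S x) := fun x hx ↦ by
    rw [divergence_smul (hη.hasFDerivAt_dilate R x).differentiableAt (hSdiff x hx), hdiv x hx,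
      mul_zero, add_zero]
  have hdisc : ∀ x, enorm (x - x₀) ≤ 1 → ‖x‖ < R / 2 := fun x hx ↦ by
    linarith [norm_le_norm_add_norm_sub' x x₀, norm_le_enorm (x - x₀)]
  have hcircle : unitCircleFlux (fun y ↦ dilate η R y • S y) x₀ = unitCircleFlux S x₀ := by
    refine intervalIntegral.integral_congr fun θ _ ↦ ?_
    have hθ : ‖x₀ + radialDir θ‖ < R / 2 := hdisc _ <| by
      simpa using (enorm_smul_radialDir 1 θ).le
    simp only [hη.dilate_eq_one hR₀ hθ.le, one_smul]
  have hX : ContDiffOn ℝ 1 (fun y ↦ dilate η R y • S y) {x | x ≠ x₀} :=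
    ((hη.contDiff_dilate R).of_le one_le_two).contDiffOn.smul hS
  rw [← hcircle, ← integral_divergence_eq_neg_unitCircleFlux hX (r := 2 * (2 * R + ‖x₀‖))]
  · refine integral_congr_ae ?_
    filter_upwards [compl_mem_ae_iff.2 (measure_singleton x₀)] with x hx using (hdivX x hx).symm
  · intro x hx hx₁
    rw [hdivX x hx, hη.fderiv_dilate_eq_zero hR₀ (.inl (hdisc x hx₁)), zero_apply]
  · linarith [norm_nonneg x₀]
  · intro x hx
    have hx₂ : 2 * R ≤ ‖x‖ := by
      have := enorm_le_card_mul_norm (x - x₀)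
      push_cast at this
      linarith [norm_sub_le x x₀]
    rw [hη.dilate_eq_zero hR₀ hx₂, zero_smul]

theorem tendsto_tsum_dilate_mul_bond_differences_of_divergence_eq_zero (hA : IsUnit A.det)
    (hη : IsCutoff η) {ι : Type*} [Fintype ι] {ρ : ι → Vec 2} {w : Vec 2 → ι → ℝ}
    (hρ : ∀ i, ρ i ∈ Lattice _ A) (hw : w =O[latticeAtInfinity A] fun l ↦ ‖l‖⁻¹)
    (hmoment : (fun l ↦ ∑ i, w l i • ρ i - |A.det| • S l) =O[latticeAtInfinity A]
      fun l ↦ ‖l‖⁻¹ ^ 2)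
    (hS : ContDiffOn ℝ 1 S {x | x ≠ x₀}) (hdiv : ∀ x, x ≠ x₀ → divergence S x = 0)
    (hS_decay : S =O[cobounded _] fun x ↦ ‖x‖⁻¹)
    (hDS_decay : fderiv ℝ S =O[cobounded _] fun x ↦ ‖x‖⁻¹ ^ 2) :
    Tendsto (fun R ↦ ∑' z, dilate η R (latticePt _ A z) *
        ∑ i, (w (latticePt _ A z - ρ i) i - w (latticePt _ A z) i))
      atTop (𝓝 (-unitCircleFlux S x₀)) := by
  have hdiff : ∀ᶠ x in cobounded _, DifferentiableAt ℝ S x := by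
    filter_upwards [isBounded_def.1 (isBounded_singleton (x := x₀))] with x hx
    exact (hS.differentiableOn one_ne_zero x hx).differentiableAt (isOpen_ne.mem_nhds hx)
  have hlim := tendsto_tsum_dilate_mul_bond_differences (d := 1) hA hη hρ
    (by simpa only [pow_one] using hw) hmoment hdiff (by simpa only [pow_one] using hS_decay)
    hDS_decay
  rw [← zero_add (-unitCircleFlux S x₀)]
  refine (hlim.add_const _).congr' ?_
  filter_upwards [eventually_gt_atTop (2 * (‖x₀‖ + 1))] with R hR
  rw [integral_fderiv_dilate_apply_eq_neg_unitCircleFlux hη hS hdiv hR, sub_add_cancel]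

end CircleFlux

section OneSidedLimits

variable {E F : Type*} [NormedAddCommGroup E] [NormedSpace ℝ E] [NormedAddCommGroup F]
  [NormedSpace ℝ F] {f : E → F} {f' : E → E →L[ℝ] F} {L : E →L[ℝ] F} {s U U' : Set E} {x x' p : E}
  {y y' : F} {C : ℝ}

lemma norm_limit_sub_le (hU : IsOpen U) (hUconvex : Convex ℝ U) (hs : Convex ℝ s)
    (hf : ∀ z ∈ U, HasFDerivAt f (f' z) z) (hC : ∀ z ∈ s, ‖f' z - L‖ ≤ C)
    (hx : x ∈ U) (hxs : x ∈ s) (hp : p ∈ closure U) (hps : p ∈ s)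
    (hlim : Tendsto f (𝓝[U] p) (𝓝 y)) : ‖y - f x - L (p - x)‖ ≤ C * ‖p - x‖ := by
  have hclosure : p ∈ closure (U ∩ s) := by
    have hsub : openSegment ℝ x p ⊆ U ∩ s := Set.subset_inter
      ((hUconvex.openSegment_interior_closure_subset_interior (hU.interior_eq.symm ▸ hx) hp).trans
        interior_subset)
      ((openSegment_subset_segment ℝ x p).trans (hs.segment_subset hxs hps))
    exact closure_mono hsub (segment_subset_closure_openSegment (right_mem_segment ℝ x p))
  have : (𝓝[U ∩ s] p).NeBot := mem_closure_iff_nhdsWithin_neBot.1 hclosure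
  have hid : Tendsto id (𝓝[U ∩ s] p) (𝓝 p) := tendsto_id.mono_left nhdsWithin_le_nhds
  refine le_of_tendsto_of_tendsto
    (((hlim.mono_left (nhdsWithin_mono p Set.inter_subset_left)).sub_const (f x)).sub
      ((L.continuous.tendsto _).comp (hid.sub_const x))).norm
    ((hid.sub_const x).norm.const_mul C) ?_
  filter_upwards [self_mem_nhdsWithin] with z hz
  exact (hUconvex.inter hs).norm_image_sub_le_of_norm_hasFDerivWithin_le'
    (fun q hq ↦ (hf q hq.1).hasFDerivWithinAt) (fun q hq ↦ hC q hq.2) ⟨hx, hxs⟩ hz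

lemma norm_sub_sub_jump_le (hU : IsOpen U) (hUconvex : Convex ℝ U) (hU' : IsOpen U')
    (hU'convex : Convex ℝ U') (hf : ∀ z ∈ U ∪ U', HasFDerivAt f (f' z) z)
    (hC : ∀ z ∈ segment ℝ x x', ‖f' z - L‖ ≤ C) (hx : x ∈ U) (hx' : x' ∈ U')
    (hp : p ∈ segment ℝ x x') (hpU : p ∈ closure U) (hpU' : p ∈ closure U')
    (hlim : Tendsto f (𝓝[U] p) (𝓝 y)) (hlim' : Tendsto f (𝓝[U'] p) (𝓝 y')) :
    ‖f x' - f x - L (x' - x) - (y' - y)‖ ≤ C * ‖x' - x‖ := by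
  have hnear := norm_limit_sub_le hU hUconvex (convex_segment x x') (fun z hz ↦ hf z (.inl hz)) hC
    hx (left_mem_segment ℝ x x') hpU hp hlim
  have hfar := norm_limit_sub_le hU' hU'convex (convex_segment x x') (fun z hz ↦ hf z (.inr hz)) hC
    hx' (right_mem_segment ℝ x x') hpU' hp hlim'
  have hdist : ‖p - x‖ + ‖p - x'‖ = ‖x' - x‖ := by
    simpa only [dist_eq_norm, norm_sub_rev x p, norm_sub_rev x x'] using
      dist_add_dist_of_mem_segment hp
  calc ‖f x' - f x - L (x' - x) - (y' - y)‖
      = ‖(y - f x - L (p - x)) - (y' - f x' - L (p - x'))‖ := by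
        congr 1
        simp only [map_sub]
        abel
    _ ≤ C * ‖p - x‖ + C * ‖p - x'‖ := (norm_sub_le _ _).trans (add_le_add hnear hfar)
    _ = C * ‖x' - x‖ := by rw [← mul_add, hdist]

end OneSidedLimits

section Slip

open Bornology
open scoped Asymptotics

variable {N : ℕ} {xhat : Vec 2} {b : Vec N} {u : Vec 2 → Vec N} {F : Vec 2 → Vec 2 →L[ℝ] Vec N}

/-- The branch cut `Γ`: the closed horizontal ray issuing from the dislocation core `xhat`. -/
def cut (xhat : Vec 2) : Set (Vec 2) := {x | x 1 = xhat 1 ∧ xhat 0 ≤ x 0}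

/-- `u` has one-sided limits across the cut, and jumps there by the constant slip vector `-b`. -/
def HasSlip (xhat : Vec 2) (b : Vec N) (u : Vec 2 → Vec N) : Prop :=
  ∀ x ∈ cut xhat, x ≠ xhat → ∃ uplus uminus : Vec N,
    Tendsto u (𝓝[{y | xhat 1 < y 1}] x) (𝓝 uplus) ∧
    Tendsto u (𝓝[{y | y 1 < xhat 1}] x) (𝓝 uminus) ∧ uplus - uminus = -b

lemma notMem_cut_of_mem_segment {x y z : Vec 2} (hx : x ∉ cut xhat) (hy : y ∉ cut xhat)
    (hside : 0 ≤ (x 1 - xhat 1) * (y 1 - xhat 1)) (hz : z ∈ segment ℝ x y) : z ∉ cut xhat := by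
  obtain ⟨s, t, hs, ht, hst, rfl⟩ := hz
  rintro ⟨hz₁, hz₀⟩
  simp only [Pi.add_apply, Pi.smul_apply, smul_eq_mul] at hz₁ hz₀
  have hheight : s * (x 1 - xhat 1) + t * (y 1 - xhat 1) = 0 := by
    linear_combination hz₁ - xhat 1 * hst
  have hx₁ : s = 0 ∨ x 1 = xhat 1 := by
    have : s * (x 1 - xhat 1) ^ 2 + t * ((x 1 - xhat 1) * (y 1 - xhat 1)) = 0 := by
      linear_combination (x 1 - xhat 1) * hheight
    simpa [sub_eq_zero] using
      ((add_eq_zero_iff_of_nonneg (by positivity) (mul_nonneg ht hside)).1 this).1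
  have hy₁ : t = 0 ∨ y 1 = xhat 1 := by
    have : s * ((x 1 - xhat 1) * (y 1 - xhat 1)) + t * (y 1 - xhat 1) ^ 2 = 0 := by
      linear_combination (y 1 - xhat 1) * hheight
    simpa [sub_eq_zero] using
      ((add_eq_zero_iff_of_nonneg (mul_nonneg hs hside) (by positivity)).1 this).2
  rcases hx₁ with rfl | hx₁
  · obtain rfl : t = 1 := by linarith
    exact hy ⟨by linarith, by linarith⟩
  rcases hy₁ with rfl | hy₁
  · obtain rfl : s = 1 := by linarith
    exact hx ⟨by linarith, by linarith⟩
  have hx₀ : x 0 < xhat 0 := not_le.1 fun h ↦ hx ⟨hx₁, h⟩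
  have hy₀ : y 0 < xhat 0 := not_le.1 fun h ↦ hy ⟨hy₁, h⟩
  exact (convex_Iio (xhat 0) hx₀ hy₀ hs ht hst).not_ge hz₀

lemma norm_D1_sub_fderiv_sub_jump_le {I I' : Set ℝ} (hI : IsOpen I) (hIconvex : Convex ℝ I)
    (hI' : IsOpen I') (hI'convex : Convex ℝ I')
    (hF : ∀ x : Vec 2, x 1 ∈ I ∪ I' → HasFDerivAt u (F x) x) {x ρ p : Vec 2} {C : ℝ}
    (hC : ∀ z ∈ segment ℝ x (x + ρ), ‖F z - F x‖ ≤ C) (hx : x 1 ∈ I) (hxρ : (x + ρ) 1 ∈ I')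
    (hp : p ∈ segment ℝ x (x + ρ)) (hpI : p 1 ∈ closure I) (hpI' : p 1 ∈ closure I') {y y' : Vec N}
    (hlim : Tendsto u (𝓝[{z | z 1 ∈ I}] p) (𝓝 y))
    (hlim' : Tendsto u (𝓝[{z | z 1 ∈ I'}] p) (𝓝 y')) :
    ‖D1 ρ u x - F x ρ - (y' - y)‖ ≤ C * ‖ρ‖ := by
  have hclosure : ∀ J : Set ℝ, closure {z : Vec 2 | z 1 ∈ J} = {z | z 1 ∈ closure J} := fun J ↦
    ((isOpenMap_eval (X := fun _ : Fin 2 ↦ ℝ) 1).preimage_closure_eq_closure_preimage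
      (continuous_apply 1) J).symm
  have hconvex : ∀ J : Set ℝ, Convex ℝ J → Convex ℝ {z : Vec 2 | z 1 ∈ J} := fun J hJ ↦
    hJ.linear_preimage (LinearMap.proj 1 : Vec 2 →ₗ[ℝ] ℝ)
  have := norm_sub_sub_jump_le (hI.preimage (continuous_apply 1)) (hconvex I hIconvex)
    (hI'.preimage (continuous_apply 1)) (hconvex I' hI'convex) hF hC hx hxρ hp
    ((hclosure I).ge hpI) ((hclosure I').ge hpI') hlim hlim'
  simpa only [D1, add_sub_cancel_left] using this

lemma exists_norm_D1_sub_fderiv_sub_slip_le (hF : ∀ x ∉ cut xhat, HasFDerivAt u (F x) x)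
    (hslip : HasSlip xhat b u) {x ρ : Vec 2} (hx : x ∉ cut xhat) (hxρ : x + ρ ∉ cut xhat)
    (hcore : xhat ∉ segment ℝ x (x + ρ)) {C : ℝ}
    (hC : ∀ z ∈ segment ℝ x (x + ρ), ‖F z - F x‖ ≤ C) :
    ∃ v, (v = 0 ∨ v = b ∨ v = -b) ∧ ‖D1 ρ u x - F x ρ - v‖ ≤ C * ‖ρ‖ := by
  by_cases hmeet : ∃ p ∈ segment ℝ x (x + ρ), p ∈ cut xhat
  · obtain ⟨p, hp, hpcut⟩ := hmeet
    obtain ⟨uplus, uminus, hplus, hminus, hjump⟩ := hslip p hpcut fun h ↦ hcore (h ▸ hp)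
    have hopposite : (x 1 - xhat 1) * ((x + ρ) 1 - xhat 1) < 0 :=
      not_le.1 fun h ↦ notMem_cut_of_mem_segment hx hxρ h hp hpcut
    have hIoi : p 1 ∈ closure (Set.Ioi (xhat 1)) := by simp [hpcut.1]
    have hIio : p 1 ∈ closure (Set.Iio (xhat 1)) := by simp [hpcut.1]
    have hoff : ∀ z : Vec 2, z 1 < xhat 1 ∨ xhat 1 < z 1 → HasFDerivAt u (F z) z := fun z hz ↦
      hF z fun h ↦ hz.elim h.1.not_lt h.1.not_gt
    rcases mul_neg_iff.1 hopposite with ⟨hup, hdown⟩ | ⟨hdown, hup⟩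
    · refine ⟨uminus - uplus, .inr (.inl (by rw [← neg_sub, hjump, neg_neg])), ?_⟩
      exact norm_D1_sub_fderiv_sub_jump_le isOpen_Ioi (convex_Ioi _) isOpen_Iio (convex_Iio _)
        (fun z hz ↦ hoff z hz.symm) hC (sub_pos.1 hup) (sub_neg.1 hdown) hp hIoi hIio hplus hminus
    · refine ⟨uplus - uminus, .inr (.inr hjump), ?_⟩
      exact norm_D1_sub_fderiv_sub_jump_le isOpen_Iio (convex_Iio _) isOpen_Ioi (convex_Ioi _)
        hoff hC (sub_neg.1 hdown) (sub_pos.1 hup) hp hIio hIoi hminus hplus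
  · have := (convex_segment x (x + ρ)).norm_image_sub_le_of_norm_hasFDerivWithin_le'
      (fun z hz ↦ (hF z fun h ↦ hmeet ⟨z, hz, h⟩).hasFDerivWithinAt) hC
      (left_mem_segment ℝ x _) (right_mem_segment ℝ x _)
    exact ⟨0, .inl rfl, by simpa only [D1, sub_zero, add_sub_cancel_left] using this⟩

lemma half_norm_le_of_mem_segment {E : Type*} [NormedAddCommGroup E] [NormedSpace ℝ E]
    {x ρ z : E} (hρ : 2 * ‖ρ‖ ≤ ‖x‖) (hz : z ∈ segment ℝ x (x + ρ)) : ‖x‖ / 2 ≤ ‖z‖ := by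
  have hzx : ‖z - x‖ ≤ ‖ρ‖ := by simpa using norm_sub_le_of_mem_segment hz
  linarith [norm_le_norm_add_norm_sub z x]

lemma exists_norm_sub_le_on_segment {E F : Type*} [NormedAddCommGroup E] [NormedSpace ℝ E]
    [NormedAddCommGroup F] [NormedSpace ℝ F] {f : E → F}
    (hf : ∀ᶠ x in cobounded E, DifferentiableAt ℝ f x) {k : ℕ}
    (hDf : fderiv ℝ f =O[cobounded E] fun x ↦ ‖x‖⁻¹ ^ k) (ρ : E) :
    ∃ C, ∀ᶠ x in cobounded E, ∀ z ∈ segment ℝ x (x + ρ), ‖f z - f x‖ ≤ C * ‖x‖⁻¹ ^ k := by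
  obtain ⟨c, hc, hcf⟩ := hDf.exists_pos
  obtain ⟨r, -, hr⟩ := hasBasis_cobounded_norm.eventually_iff.1 (hf.and hcf.bound)
  refine ⟨c * 2 ^ k * ‖ρ‖, ?_⟩
  filter_upwards [eventually_cobounded_le_norm (2 * r), eventually_cobounded_le_norm (2 * ‖ρ‖),
    eventually_cobounded_le_norm 1] with x hxr hxρ hx₁ z hz
  have hderiv : ∀ q ∈ segment ℝ x (x + ρ), ‖fderiv ℝ f q‖ ≤ c * (‖x‖ / 2)⁻¹ ^ k := fun q hq ↦ by
    have hxq := half_norm_le_of_mem_segment hxρ hq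
    refine (hr (show r ≤ ‖q‖ by linarith)).2.trans ?_
    rw [Real.norm_of_nonneg (by positivity)]
    gcongr
  have hmvt := (convex_segment x (x + ρ)).norm_image_sub_le_of_norm_fderiv_le
    (fun q hq ↦ (hr (show r ≤ ‖q‖ by linarith [half_norm_le_of_mem_segment hxρ hq])).1) hderiv
    (left_mem_segment ℝ x _) hz
  calc ‖f z - f x‖ ≤ c * (‖x‖ / 2)⁻¹ ^ k * ‖z - x‖ := hmvt
    _ ≤ c * (‖x‖ / 2)⁻¹ ^ k * ‖ρ‖ := by
        gcongr
        simpa using norm_sub_le_of_mem_segment hz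
    _ = c * 2 ^ k * ‖ρ‖ * ‖x‖⁻¹ ^ k := by rw [inv_div, div_pow, inv_pow]; ring

lemma exists_eventually_norm_D1_sub_fderiv_sub_slip_le {A : Matrix (Fin 2) (Fin 2) ℝ}
    (hlattice : ∀ l ∈ Lattice 2 A, l ∉ cut xhat) (hF : ∀ x ∉ cut xhat, HasFDerivAt u (F x) x)
    (hslip : HasSlip xhat b u) (hFdiff : ∀ᶠ x in cobounded _, DifferentiableAt ℝ F x)
    (hDF : fderiv ℝ F =O[cobounded _] fun x ↦ ‖x‖⁻¹ ^ 2) {ρ : Vec 2} (hρ : ρ ∈ Lattice 2 A) :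
    ∃ C, ∀ᶠ l in latticeAtInfinity A, ∃ v, (v = 0 ∨ v = b ∨ v = -b) ∧
      ‖D1 ρ u l - F l ρ - v‖ ≤ C * ‖l‖⁻¹ ^ 2 * ‖ρ‖ := by
  have hle := latticeAtInfinity_le_cobounded A
  obtain ⟨C, hC⟩ := exists_norm_sub_le_on_segment hFdiff hDF ρ
  have hcore : ∀ᶠ l in cobounded _, xhat ∉ segment ℝ l (l + ρ) := by
    filter_upwards [eventually_cobounded_le_norm (2 * ‖ρ‖),
      eventually_cobounded_le_norm (2 * ‖xhat‖ + 1)] with l hlρ hl h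
    linarith [half_norm_le_of_mem_segment hlρ h]
  refine ⟨C, ?_⟩
  filter_upwards [eventually_mem_Lattice A, hC.filter_mono hle, hcore.filter_mono hle]
    with l hl hCl hcorel
  exact exists_norm_D1_sub_fderiv_sub_slip_le hF hslip (hlattice l hl)
    (hlattice _ (add_mem_Lattice hl hρ)) hcorel hCl

/-- Away from the core `D1 ρ u` equals `F ρ` plus `0` or `±b`, up to a second-order error; as both
`D1 ρ u` and `F ρ` tend to zero, a nonzero slip cannot occur infinitely often. -/
theorem isBigO_D1_sub_fderiv {A : Matrix (Fin 2) (Fin 2) ℝ}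
    (hlattice : ∀ l ∈ Lattice 2 A, l ∉ cut xhat) (hF : ∀ x ∉ cut xhat, HasFDerivAt u (F x) x)
    (hslip : HasSlip xhat b u) (hFdiff : ∀ᶠ x in cobounded _, DifferentiableAt ℝ F x)
    (hF_lim : Tendsto F (cobounded _) (𝓝 0))
    (hDF : fderiv ℝ F =O[cobounded _] fun x ↦ ‖x‖⁻¹ ^ 2) {ρ : Vec 2} (hρ : ρ ∈ Lattice 2 A)
    (hD : Tendsto (D1 ρ u) (latticeAtInfinity A) (𝓝 0)) :
    (fun l ↦ D1 ρ u l - F l ρ) =O[latticeAtInfinity A] fun l ↦ ‖l‖⁻¹ ^ 2 := by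
  have hle := latticeAtInfinity_le_cobounded A
  obtain ⟨C, hbound⟩ :=
    exists_eventually_norm_D1_sub_fderiv_sub_slip_le hlattice hF hslip hFdiff hDF hρ
  have hslip_small : Tendsto (fun l ↦ ‖D1 ρ u l - F l ρ‖ + C * ‖l‖⁻¹ ^ 2 * ‖ρ‖)
      (latticeAtInfinity A) (𝓝 0) := by
    have hFρ : Tendsto (fun l ↦ F l ρ) (cobounded _) (𝓝 0) :=
      ((ContinuousLinearMap.apply ℝ (Vec N) ρ).continuous.tendsto' 0 0 (map_zero _)).comp hF_lim
    simpa using (hD.sub (hFρ.mono_left hle)).norm.add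
      (((((tendsto_inv_norm_cobounded _).mono_left hle).pow 2).const_mul C).mul_const ‖ρ‖)
  have hnoslip : ∀ᶠ l in latticeAtInfinity A, b = 0 ∨
      ‖D1 ρ u l - F l ρ‖ + C * ‖l‖⁻¹ ^ 2 * ‖ρ‖ < ‖b‖ := by
    rcases eq_or_ne b 0 with hb | hb
    · exact .of_forall fun _ ↦ .inl hb
    · exact (hslip_small.eventually_lt_const (norm_pos_iff.2 hb)).mono fun _ ↦ .inr
  refine .of_bound (C * ‖ρ‖) ?_
  filter_upwards [hbound, hnoslip] with l ⟨v, hv, hle_v⟩ hb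
  have hv₀ : v = 0 := by
    rcases hb with rfl | hb
    · simpa using hv
    refine hv.resolve_right fun hvb ↦ ?_
    have hnorm : ‖v‖ = ‖b‖ := by rcases hvb with rfl | rfl <;> simp
    linarith [norm_le_norm_add_norm_sub (D1 ρ u l - F l ρ) v]
  rw [hv₀, sub_zero] at hle_v
  rw [Real.norm_of_nonneg (by positivity)]
  linarith

end Slip

section BondForces

open Bornology
open scoped Asymptotics

variable {d N : ℕ} {A : Matrix (Fin d) (Fin d) ℝ} {R : Finset (Vec d)}
  {V : ({x // x ∈ R} → Vec N) → ℝ} {u : Vec d → Vec N} {F : Vec d → Vec d →L[ℝ] Vec N}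

/-- Component `i` of the bond force `∂V/∂g_ρ`, linearised at the reference configuration `g = 0`. -/
def linearBondForce (V : ({x // x ∈ R} → Vec N) → ℝ) (ρ : {x // x ∈ R}) (i : Fin N) :
    ({x // x ∈ R} → Vec N) →L[ℝ] ℝ :=
  fderiv ℝ (fderiv ℝ V) 0 (Pi.single ρ (Pi.single i 1))

lemma isBigO_gradV_taylor_remainder (hV : ContDiffAt ℝ 3 V 0) (ρ : {x // x ∈ R}) (i : Fin N) :
    (fun g ↦ gradV R V ρ g i - gradV R V ρ 0 i - linearBondForce V ρ i g) =O[𝓝 0]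
      fun g ↦ ‖g‖ ^ 2 := by
  have hsymm : IsSymmSndFDerivAt ℝ V 0 :=
    hV.isSymmSndFDerivAt (by rw [minSmoothness_of_isRCLikeNormedField]; norm_num)
  have htaylor := isBigO_taylor_remainder (hV.fderiv_right (m := 2) (by norm_num))
  have happly := (ContinuousLinearMap.apply ℝ ℝ
    (Pi.single ρ (Pi.single i 1) : {x // x ∈ R} → Vec N)).isBigO_comp
      (fun g ↦ fderiv ℝ V g - fderiv ℝ V 0 - fderiv ℝ (fderiv ℝ V) 0 (g - 0)) (𝓝 0)
  simpa only [sub_zero, ContinuousLinearMap.apply_apply, sub_apply, gradV, linearBondForce,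
    hsymm.eq] using happly.trans htaylor

lemma linearBondForce_apply (ρ : {x // x ∈ R}) (i : Fin N) (g : {x // x ∈ R} → Vec N) :
    linearBondForce V ρ i g =
      ∑ σ : {x // x ∈ R}, ∑ j, CofV R V ρ σ i j * g σ j := by
  have hg : g = ∑ σ : {x // x ∈ R}, ∑ j,
      g σ j • (Pi.single σ (Pi.single j 1) : {x // x ∈ R} → Vec N) := by
    conv_lhs => rw [← Finset.univ_sum_single g]
    refine Finset.sum_congr rfl fun σ _ ↦ ?_
    conv_lhs => rw [pi_eq_sum_univ' (g σ)]
    simp only [← Pi.single_smul]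
    exact map_sum (AddMonoidHom.single (fun _ : {x // x ∈ R} ↦ Vec N) σ) _ _
  conv_lhs => rw [hg]
  simp only [map_sum, map_smul, smul_eq_mul]
  refine Finset.sum_congr rfl fun σ _ ↦ Finset.sum_congr rfl fun j _ ↦ ?_
  simp [linearBondForce, CofV, iteratedFDeriv_two_apply, mul_comm]

/-- Row `i` of the Cauchy–Born stress `ℂ[L]`, as a linear function of the displacement gradient
`L`. -/
def cauchyBornStress (A : Matrix (Fin d) (Fin d) ℝ) (R : Finset (Vec d))
    (C : Vec d → Vec d → Fin N → Fin N → ℝ) (i : Fin N) : (Vec d →L[ℝ] Vec N) →L[ℝ] Vec d :=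
  ContinuousLinearMap.pi fun a ↦ ∑ j, ∑ b, CB A R C i a j b •
    (ContinuousLinearMap.proj (R := ℝ) (φ := fun _ : Fin N ↦ ℝ) j).comp
      (ContinuousLinearMap.apply ℝ (Vec N) (Pi.single b 1 : Vec d))

lemma cauchyBornStress_apply (C : Vec d → Vec d → Fin N → Fin N → ℝ) (i : Fin N)
    (L : Vec d →L[ℝ] Vec N) (a : Fin d) :
    cauchyBornStress A R C i L a = ∑ j, ∑ b, CB A R C i a j b * L (Pi.single b 1) j := by
  simp [cauchyBornStress]

lemma divergence_cauchyBornStress_comp {C : Vec d → Vec d → Fin N → Fin N → ℝ} {x : Vec d}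
    (hF : DifferentiableAt ℝ F x) (i : Fin N) :
    divergence (fun y ↦ cauchyBornStress A R C i (F y)) x =
      ∑ a, fderiv ℝ (fun y ↦ ∑ j, ∑ b, CB A R C i a j b * F y (Pi.single b 1) j) x
        (Pi.single a 1) := by
  have hstress : DifferentiableAt ℝ (fun y ↦ cauchyBornStress A R C i (F y)) x :=
    (cauchyBornStress A R C i).differentiableAt.comp x hF
  simp only [divergence, ← cauchyBornStress_apply, fderiv_apply hstress]
  rfl

lemma isBigO_fderiv_cauchyBornStress_comp {C : Vec d → Vec d → Fin N → Fin N → ℝ} (i : Fin N)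
    {l : Filter (Vec d)} (hF : ∀ᶠ x in l, DifferentiableAt ℝ F x) :
    fderiv ℝ (fun y ↦ cauchyBornStress A R C i (F y)) =O[l] fderiv ℝ F := by
  refine .of_bound ‖cauchyBornStress A R C i‖ ?_
  filter_upwards [hF] with x hx
  have hcomp : fderiv ℝ (fun y ↦ cauchyBornStress A R C i (F y)) x =
      (cauchyBornStress A R C i).comp (fderiv ℝ F x) :=
    ((cauchyBornStress A R C i).hasFDerivAt.comp x hx.hasFDerivAt).fderiv
  exact hcomp ▸ ContinuousLinearMap.opNorm_comp_le _ _

/-- The stencil `(L σ)_{σ ∈ R}` of the homogeneous deformation `x ↦ L x`. -/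
def homogeneousStencil (R : Finset (Vec d)) :
    (Vec d →L[ℝ] Vec N) →L[ℝ] {x // x ∈ R} → Vec N :=
  ContinuousLinearMap.pi fun σ ↦ ContinuousLinearMap.apply ℝ (Vec N) (σ : Vec d)

lemma homogeneousStencil_apply (L : Vec d →L[ℝ] Vec N) (σ : {x // x ∈ R}) :
    homogeneousStencil R L σ = L σ := rfl

lemma sum_linearBondForce_smul (hA : IsUnit A.det) (i : Fin N) (L : Vec d →L[ℝ] Vec N) :
    ∑ ρ, linearBondForce V ρ i (homogeneousStencil R L) • (ρ : Vec d) =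
      |A.det| • cauchyBornStress A R (CofV R V) i L := by
  have hL : ∀ (σ : {x // x ∈ R}) j, L σ j = ∑ b, σ.1 b * L (Pi.single b 1) j := fun σ j ↦ by
    conv_lhs => rw [pi_eq_sum_univ' σ.1]
    simp
  have hCB : ∀ a j b, |A.det| * CB A R (CofV R V) i a j b =
      ∑ ρ : {x // x ∈ R}, ∑ σ : {x // x ∈ R}, CofV R V ρ σ i j * ρ.1 a * σ.1 b := fun a j b ↦ by
    rw [CB, mul_inv_cancel_left₀ (abs_ne_zero.2 hA.ne_zero), ← Finset.sum_coe_sort R]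
    exact Finset.sum_congr rfl fun ρ _ ↦ (Finset.sum_coe_sort R _).symm
  have hcomm : ∀ {n : ℕ} (f : {x // x ∈ R} → {x // x ∈ R} → Fin n → ℝ),
      ∑ ρ, ∑ σ, ∑ j, f ρ σ j = ∑ j, ∑ ρ, ∑ σ, f ρ σ j := fun f ↦
    (Finset.sum_congr rfl fun ρ _ ↦ Finset.sum_comm).trans Finset.sum_comm
  ext a
  calc (∑ ρ, linearBondForce V ρ i (homogeneousStencil R L) • (ρ : Vec d)) a
      = ∑ ρ : {x // x ∈ R}, ∑ σ : {x // x ∈ R}, ∑ j, ∑ b,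
          CofV R V ρ σ i j * ρ.1 a * σ.1 b * L (Pi.single b 1) j := by
        simp only [Finset.sum_apply, Pi.smul_apply, smul_eq_mul, linearBondForce_apply,
          homogeneousStencil_apply, Finset.sum_mul, hL, Finset.mul_sum]
        refine Finset.sum_congr rfl fun ρ _ ↦ Finset.sum_congr rfl fun σ _ ↦
          Finset.sum_congr rfl fun j _ ↦ Finset.sum_congr rfl fun b _ ↦ ?_
        ring
    _ = ∑ j, ∑ b, ∑ ρ : {x // x ∈ R}, ∑ σ : {x // x ∈ R},
          CofV R V ρ σ i j * ρ.1 a * σ.1 b * L (Pi.single b 1) j := by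
        rw [hcomm]
        exact Finset.sum_congr rfl fun j _ ↦ hcomm _
    _ = |A.det| * ∑ j, ∑ b, CB A R (CofV R V) i a j b * L (Pi.single b 1) j := by
        simp only [Finset.mul_sum, ← mul_assoc, hCB, Finset.sum_mul]
    _ = (|A.det| • cauchyBornStress A R (CofV R V) i L) a := by
        rw [Pi.smul_apply, cauchyBornStress_apply, smul_eq_mul]

lemma deltaEpt_apply (l : Vec d) (i : Fin N) :
    deltaEpt R V u l i = ∑ ρ : {x // x ∈ R},
      ((gradV R V ρ (Dstencil R u (l - ρ)) i - gradV R V ρ 0 i) -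
        (gradV R V ρ (Dstencil R u l) i - gradV R V ρ 0 i)) := by
  simp only [deltaEpt, Finset.sum_apply, Pi.sub_apply, Finset.univ_eq_attach,
    sub_sub_sub_cancel_right]

lemma Hop_apply (l : Vec d) (i : Fin N) :
    Hop d N R (CofV R V) u l i = ∑ ρ : {x // x ∈ R},
      (linearBondForce V ρ i (Dstencil R u (l - ρ)) - linearBondForce V ρ i (Dstencil R u l)) := by
  simp only [Hop, Finset.sum_apply, Pi.sub_apply, mulV, linearBondForce_apply, Dstencil,
    ← Finset.sum_sub_distrib, ← Finset.sum_coe_sort R]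

lemma isBigO_Dstencil {l : Filter (Vec d)} (hl : l ≤ cobounded (Vec d))
    (hF : F =O[cobounded _] fun x ↦ ‖x‖⁻¹)
    (hD : (fun x ↦ Dstencil R u x - homogeneousStencil R (F x)) =O[l] fun x ↦ ‖x‖⁻¹ ^ 2) :
    Dstencil R u =O[l] fun x ↦ ‖x‖⁻¹ := by
  simpa only [sub_add_cancel] using (hD.trans ((isBigO_inv_norm_sq_inv_norm _).mono hl)).add
    (((homogeneousStencil R).isBigO_comp F l).trans (hF.mono hl))

lemma isBigO_gradV_sub_linearBondForce {l : Filter (Vec d)} (hl : l ≤ cobounded (Vec d))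
    (hV : ContDiffAt ℝ 3 V 0) (hD : Dstencil R u =O[l] fun x ↦ ‖x‖⁻¹) (ρ : {x // x ∈ R})
    (i : Fin N) :
    (fun x ↦ gradV R V ρ (Dstencil R u x) i - gradV R V ρ 0 i -
      linearBondForce V ρ i (Dstencil R u x)) =O[l] fun x ↦ ‖x‖⁻¹ ^ 2 :=
  ((isBigO_gradV_taylor_remainder hV ρ i).comp_tendsto
    (hD.trans_tendsto ((tendsto_inv_norm_cobounded _).mono_left hl))).trans (hD.norm_left.pow 2)

lemma isBigO_sum_smul_sub_cauchyBornStress {l : Filter (Vec d)} (hA : IsUnit A.det) {i : Fin N}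
    {w : Vec d → {x // x ∈ R} → ℝ} {g : Vec d → ℝ}
    (hD : (fun x ↦ Dstencil R u x - homogeneousStencil R (F x)) =O[l] g)
    (hw : ∀ ρ, (fun x ↦ w x ρ - linearBondForce V ρ i (Dstencil R u x)) =O[l] g) :
    (fun x ↦ ∑ ρ, w x ρ • (ρ : Vec d) - |A.det| • cauchyBornStress A R (CofV R V) i (F x))
      =O[l] g := by
  have hw' : ∀ ρ, (fun x ↦ w x ρ - linearBondForce V ρ i (homogeneousStencil R (F x)))
      =O[l] g := fun ρ ↦ by
    simpa only [map_sub, sub_add_sub_cancel] using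
      (hw ρ).add (((linearBondForce V ρ i).isBigO_comp _ l).trans hD)
  simp only [← sum_linearBondForce_smul hA, ← Finset.sum_sub_distrib, ← sub_smul]
  refine Asymptotics.IsBigO.fun_sum fun ρ _ ↦ ?_
  exact ((ContinuousLinearMap.toSpanSingleton ℝ (ρ : Vec d)).isBigO_comp _ l).trans (hw' ρ)

end BondForces

section NetForce

open Bornology
open scoped Asymptotics

variable {N : ℕ} {A : Matrix (Fin 2) (Fin 2) ℝ} {R : Finset (Vec 2)}
  {V : ({x // x ∈ R} → Vec N) → ℝ} {xhat : Vec 2} {b : Vec N} {u : Vec 2 → Vec N}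
  {F : Vec 2 → Vec 2 →L[ℝ] Vec N} {η : Vec 2 → ℝ}

lemma isBigO_Dstencil_sub_homogeneousStencil (hRlat : ∀ ρ ∈ R, ρ ∈ Lattice 2 A)
    (hlattice : ∀ l ∈ Lattice 2 A, l ∉ cut xhat) (hF : ∀ x ∉ cut xhat, HasFDerivAt u (F x) x)
    (hslip : HasSlip xhat b u) (hFdiff : ∀ᶠ x in cobounded _, DifferentiableAt ℝ F x)
    (hF_decay : F =O[cobounded _] fun x ↦ ‖x‖⁻¹)
    (hDF_decay : fderiv ℝ F =O[cobounded _] fun x ↦ ‖x‖⁻¹ ^ 2)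
    (hD : ∀ ρ ∈ R, Tendsto (D1 ρ u) (latticeAtInfinity A) (𝓝 0)) :
    (fun l ↦ Dstencil R u l - homogeneousStencil R (F l)) =O[latticeAtInfinity A]
      fun l ↦ ‖l‖⁻¹ ^ 2 :=
  Asymptotics.isBigO_pi.2 fun ρ ↦ isBigO_D1_sub_fderiv hlattice hF hslip hFdiff
    (hF_decay.trans_tendsto (tendsto_inv_norm_cobounded _)) hDF_decay (hRlat ρ ρ.2) (hD ρ ρ.2)

lemma eventually_differentiableAt_cobounded (hF : ContDiffOn ℝ 1 F {x | x ≠ xhat}) :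
    ∀ᶠ x in cobounded _, DifferentiableAt ℝ F x := by
  filter_upwards [eventually_ne_cobounded xhat] with x hx
  exact (hF.differentiableOn one_ne_zero).differentiableAt (isOpen_ne.mem_nhds hx)

set_option maxSynthPendingDepth 3 in
lemma tendsto_tsum_dilate_mul_bond_force_differences (hA : IsUnit A.det) (hη : IsCutoff η)
    (hRlat : ∀ ρ ∈ R, ρ ∈ Lattice 2 A) {i : Fin N} (hFsmooth : ContDiffOn ℝ 1 F {x | x ≠ xhat})
    (hPDE : ∀ x, x ≠ xhat →
      divergence (fun y ↦ cauchyBornStress A R (CofV R V) i (F y)) x = 0)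
    (hF_decay : F =O[cobounded _] fun x ↦ ‖x‖⁻¹)
    (hDF_decay : fderiv ℝ F =O[cobounded _] fun x ↦ ‖x‖⁻¹ ^ 2)
    (hD : (fun l ↦ Dstencil R u l - homogeneousStencil R (F l)) =O[latticeAtInfinity A]
      fun l ↦ ‖l‖⁻¹ ^ 2)
    {w : Vec 2 → {x // x ∈ R} → ℝ}
    (hw : ∀ ρ, (fun l ↦ w l ρ - linearBondForce V ρ i (Dstencil R u l)) =O[latticeAtInfinity A]
      fun l ↦ ‖l‖⁻¹ ^ 2) :
    Tendsto (fun r ↦ ∑' z, dilate η r (latticePt _ A z) *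
        ∑ ρ, (w (latticePt _ A z - ρ.1) ρ - w (latticePt _ A z) ρ)) atTop
      (𝓝 (-unitCircleFlux (fun x ↦ cauchyBornStress A R (CofV R V) i (F x)) xhat)) := by
  have hle := latticeAtInfinity_le_cobounded A
  have hw_decay : w =O[latticeAtInfinity A] fun l ↦ ‖l‖⁻¹ := Asymptotics.isBigO_pi.2 fun ρ ↦ by
    simpa only [sub_add_cancel] using
      ((hw ρ).trans ((isBigO_inv_norm_sq_inv_norm _).mono hle)).add
        (((linearBondForce V ρ i).isBigO_comp _ _).trans (isBigO_Dstencil hle hF_decay hD))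
  have hDstress := (isBigO_fderiv_cauchyBornStress_comp (A := A) (R := R) (C := CofV R V) i
    (eventually_differentiableAt_cobounded hFsmooth)).trans hDF_decay
  exact tendsto_tsum_dilate_mul_bond_differences_of_divergence_eq_zero hA hη
    (fun ρ ↦ hRlat ρ ρ.2) hw_decay (isBigO_sum_smul_sub_cauchyBornStress hA hD hw)
    ((cauchyBornStress A R (CofV R V) i).contDiff.comp_contDiffOn hFsmooth) hPDE
    (((cauchyBornStress A R (CofV R V) i).isBigO_comp F _).trans hF_decay) hDstress

lemma tendsto_tsum_dilate_smul {d : ℕ} {A : Matrix (Fin d) (Fin d) ℝ} {η : Vec d → ℝ}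
    (hA : IsUnit A.det) (hη : IsCutoff η) {f : Vec d → Vec N} {S : Vec N}
    (hf : ∀ i, Tendsto
      (fun r ↦ ∑' z : Fin d → ℤ, dilate η r (latticePt d A z) * f (latticePt d A z) i) atTop
      (𝓝 (S i))) :
    Tendsto (fun r ↦ ∑' z : Fin d → ℤ, dilate η r (latticePt d A z) • f (latticePt d A z)) atTop
      (𝓝 S) := by
  refine tendsto_pi_nhds.2 fun i ↦ (hf i).congr' ?_
  filter_upwards [eventually_gt_atTop 0] with r hr
  have hsummable : Summable fun z : Fin d → ℤ ↦
      dilate η r (latticePt d A z) • f (latticePt d A z) :=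
    summable_of_latticePt_support hA (r := 2 * r) fun z hz ↦ by
      rw [hη.dilate_eq_zero hr hz.le, zero_smul]
  rw [tsum_apply hsummable]
  rfl

theorem net_force_identity_general (hA : IsUnit A.det) (hRlat : ∀ ρ ∈ R, ρ ∈ Lattice 2 A)
    (hV : ContDiffAt ℝ 3 V 0) (hlattice : ∀ l ∈ Lattice 2 A, l ∉ cut xhat)
    (hF : ∀ x ∉ cut xhat, HasFDerivAt u (F x) x) (hFsmooth : ContDiffOn ℝ 1 F {x | x ≠ xhat})
    (hslip : HasSlip xhat b u)
    (hPDE : ∀ i x, x ≠ xhat →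
      divergence (fun y ↦ cauchyBornStress A R (CofV R V) i (F y)) x = 0)
    (hF_decay : F =O[cobounded _] fun x ↦ ‖x‖⁻¹)
    (hDF_decay : fderiv ℝ F =O[cobounded _] fun x ↦ ‖x‖⁻¹ ^ 2)
    (hD_decay : ∀ ρ ∈ R, Tendsto (D1 ρ u) (latticeAtInfinity A) (𝓝 0)) (hη : IsCutoff η) :
    Tendsto
      (fun r ↦ ∑' z : Fin 2 → ℤ, dilate η r (latticePt 2 A z) • deltaEpt R V u (latticePt 2 A z))
      atTop
      (𝓝 fun i ↦ -unitCircleFlux (fun x ↦ cauchyBornStress A R (CofV R V) i (F x)) xhat) ∧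
    Tendsto
      (fun r ↦ ∑' z : Fin 2 → ℤ,
        dilate η r (latticePt 2 A z) • Hop 2 N R (CofV R V) u (latticePt 2 A z))
      atTop
      (𝓝 fun i ↦ -unitCircleFlux (fun x ↦ cauchyBornStress A R (CofV R V) i (F x)) xhat) := by
  have hD := isBigO_Dstencil_sub_homogeneousStencil hRlat hlattice hF hslip
    (eventually_differentiableAt_cobounded hFsmooth) hF_decay hDF_decay hD_decay
  have hDu := isBigO_Dstencil (latticeAtInfinity_le_cobounded A) hF_decay hD
  constructor <;> refine tendsto_tsum_dilate_smul hA hη fun i ↦ ?_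
  · simp only [deltaEpt_apply]
    exact tendsto_tsum_dilate_mul_bond_force_differences hA hη hRlat hFsmooth (hPDE i) hF_decay
      hDF_decay hD (w := fun l ρ ↦ gradV R V ρ (Dstencil R u l) i - gradV R V ρ 0 i) fun ρ ↦
        isBigO_gradV_sub_linearBondForce (latticeAtInfinity_le_cobounded A) hV hDu ρ i
  · simp only [Hop_apply]
    exact tendsto_tsum_dilate_mul_bond_force_differences hA hη hRlat hFsmooth (hPDE i) hF_decay
      hDF_decay hD (w := fun l ρ ↦ linearBondForce V ρ i (Dstencil R u l)) fun ρ ↦ by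
        simpa only [sub_self] using Asymptotics.isBigO_zero _ _

end NetForce

section Hypotheses

open Bornology
open scoped Asymptotics

variable {d : ℕ}

lemma isBigO_inv_norm_pow_of_norm_le_enorm_rpow {E : Type*} [NormedAddCommGroup E] {f : Vec d → E}
    {x₀ : Vec d} {c : ℝ} {k : ℕ} (hf : ∀ x, x ≠ x₀ → ‖f x‖ ≤ c * enorm (x - x₀) ^ (-(k : ℝ))) :
    f =O[cobounded _] fun x ↦ ‖x‖⁻¹ ^ k := by
  refine .of_bound (|c| * 2 ^ k) ?_
  filter_upwards [eventually_cobounded_le_norm (2 * ‖x₀‖), eventually_cobounded_le_norm 1,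
    eventually_ne_cobounded x₀] with x hx hx₁ hne
  have henorm : 0 ≤ enorm (x - x₀) := Real.sqrt_nonneg _
  have hle : ‖x‖ / 2 ≤ enorm (x - x₀) := by
    linarith [norm_le_enorm (x - x₀), norm_sub_norm_le x x₀]
  calc ‖f x‖ ≤ c * enorm (x - x₀) ^ (-(k : ℝ)) := hf x hne
    _ ≤ |c| * (enorm (x - x₀))⁻¹ ^ k := by
        rw [Real.rpow_neg henorm, Real.rpow_natCast, inv_pow]
        gcongr
        exact le_abs_self c
    _ ≤ |c| * (‖x‖ / 2)⁻¹ ^ k := by gcongr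
    _ = |c| * 2 ^ k * ‖‖x‖⁻¹ ^ k‖ := by
        rw [inv_div, div_eq_mul_inv, mul_pow, norm_pow, norm_inv, norm_norm, mul_assoc]

lemma tendsto_D1_latticeAtInfinity_zero {N : ℕ} {A : Matrix (Fin d) (Fin d) ℝ}
    {u : Vec d → Vec N} {ρ x₀ : Vec d} {c : ℝ}
    (hD : ∀ z, enorm (D1 ρ u (latticePt d A z)) ≤ c * (1 + enorm (latticePt d A z - x₀))⁻¹) :
    Tendsto (D1 ρ u) (latticeAtInfinity A) (𝓝 0) := by
  have hdist : Tendsto (fun l ↦ enorm (l - x₀)) (cobounded (Vec d)) atTop := by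
    refine tendsto_atTop_mono (fun l ↦ norm_le_enorm (l - x₀)) ?_
    exact tendsto_norm_cobounded_atTop.comp (tendsto_sub_const_cobounded x₀)
  have hlim := ((tendsto_atTop_add_const_left _ 1 hdist).inv_tendsto_atTop.const_mul c).mono_left
    (latticeAtInfinity_le_cobounded A)
  rw [mul_zero] at hlim
  refine squeeze_zero_norm' ?_ hlim
  filter_upwards [eventually_mem_Lattice A] with l ⟨z, hz⟩
  exact (norm_le_enorm _).trans (hz ▸ hD z)

lemma isCutoff_of_enorm {η : Vec 2 → ℝ} (hη : ContDiff ℝ 2 η) (hη₁ : ∀ x, enorm x ≤ 1 → η x = 1)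
    (hη₀ : ∀ x, 2 ≤ enorm x → η x = 0) : IsCutoff η where
  contDiff := hη
  eq_one x hx := hη₁ x <| by have := enorm_le_card_mul_norm x; push_cast at this; linarith
  eq_zero x hx := hη₀ x (hx.trans (norm_le_enorm x))

lemma unitCircleFlux_cauchyBornStress {N : ℕ} {A : Matrix (Fin 2) (Fin 2) ℝ} {R : Finset (Vec 2)}
    {C : Vec 2 → Vec 2 → Fin N → Fin N → ℝ} (i : Fin N) (F : Vec 2 → Vec 2 →L[ℝ] Vec N)
    (x₀ : Vec 2) :
    unitCircleFlux (fun x ↦ cauchyBornStress A R C i (F x)) x₀ =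
      ∫ θ in (0 : ℝ)..2 * Real.pi, ∑ a, ∑ j, ∑ b, CB A R C i a j b *
        F (x₀ + ![Real.cos θ, Real.sin θ]) (Pi.single b 1) j * ![Real.cos θ, Real.sin θ] a := by
  simp only [unitCircleFlux, radialDir, dotV, cauchyBornStress_apply, Finset.sum_mul]

end Hypotheses

/-- Proposition: net force identity for CLE dislocation
fields. -/
theorem net_force_identity
    (N : ℕ)
    (A : Matrix (Fin 2) (Fin 2) ℝ) (hA : IsUnit A.det)
    (R : Finset (Vec 2)) (hR0 : (0 : Vec 2) ∉ R)
    (hRlat : ∀ ρ ∈ R, ρ ∈ Lattice 2 A)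
    (hRsym : ∀ ρ ∈ R, -ρ ∈ R)
    (hRspan : ∀ x ∈ Lattice 2 A, ∃ c : Vec 2 → ℤ, x = ∑ ρ ∈ R, (c ρ : ℝ) • ρ)
    (V : ({x // x ∈ R} → Vec N) → ℝ)
    (hV : ContDiff ℝ (3 : ℕ∞) V)
    (hVsym : PointSym R hRsym V)
    (xhat : Vec 2) (Γ : Set (Vec 2))
    (hΓ : Γ = {x : Vec 2 | x 1 = xhat 1 ∧ xhat 0 ≤ x 0})
    (hΓlat : ∀ z : Fin 2 → ℤ, latticePt 2 A z ∉ Γ)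
    (bvec : Vec N)
    (u : Vec 2 → Vec N) (F : Vec 2 → Vec 2 →L[ℝ] Vec N)
    (husmooth : ContDiffOn ℝ (3 : ℕ∞) u {x : Vec 2 | x ∉ Γ})
    (hF : ∀ x : Vec 2, x ∉ Γ → HasFDerivAt u (F x) x)
    (hFsmooth : ContDiffOn ℝ (2 : ℕ∞) F {x : Vec 2 | x ≠ xhat})
    (hjump : ∀ x ∈ Γ, x ≠ xhat →
      ∃ uplus uminus : Vec N,
        Tendsto u (𝓝[{y : Vec 2 | xhat 1 < y 1}] x) (𝓝 uplus) ∧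
        Tendsto u (𝓝[{y : Vec 2 | y 1 < xhat 1}] x) (𝓝 uminus) ∧
        uplus - uminus = -bvec)
    (hgradjump : ∀ x ∈ Γ, x ≠ xhat →
      ∃ w : Vec N,
        Tendsto (fun y => F y (Pi.single 1 1)) (𝓝[{y : Vec 2 | xhat 1 < y 1}] x) (𝓝 w) ∧
        Tendsto (fun y => F y (Pi.single 1 1)) (𝓝[{y : Vec 2 | y 1 < xhat 1}] x) (𝓝 w))
    (hPDE : ∀ x : Vec 2, x ≠ xhat → ∀ i : Fin N,
      (∑ a : Fin 2, fderiv ℝ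
          (fun y => ∑ j : Fin N, ∑ bb : Fin 2,
            CB A R (CofV R V) i a j bb * F y (Pi.single bb 1) j)
          x (Pi.single a 1)) = 0)
    (c : ℝ)
    (hdecay : ∀ j : ℕ, 1 ≤ j → j ≤ 3 → ∀ x : Vec 2, x ≠ xhat →
      ‖iteratedFDeriv ℝ (j - 1) F x‖ ≤ c * enorm (x - xhat) ^ (-(j : ℝ)))
    (hDdecay : ∀ (z : Fin 2 → ℤ) (ρ : Vec 2), ρ ∈ R →
      enorm (D1 ρ u (latticePt 2 A z)) ≤
        c * (1 + enorm (latticePt 2 A z - xhat))⁻¹) :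
    ∀ η : Vec 2 → ℝ, ContDiff ℝ (⊤ : ℕ∞) η →
      (∀ x, 0 ≤ η x ∧ η x ≤ 1) →
      (∀ x : Vec 2, enorm x ≤ 1 → η x = 1) →
      (∀ x : Vec 2, 2 ≤ enorm x → η x = 0) →
      Tendsto
        (fun rad : ℝ => ∑' z : Fin 2 → ℤ,
          η (rad⁻¹ • latticePt 2 A z) • deltaEpt R V u (latticePt 2 A z))
        atTop
        (𝓝 (fun i : Fin N =>
          -(∫ θ in (0 : ℝ)..(2 * Real.pi),
            ∑ a : Fin 2, ∑ j : Fin N, ∑ bb : Fin 2,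
              CB A R (CofV R V) i a j bb *
                F (xhat + ![Real.cos θ, Real.sin θ]) (Pi.single bb 1) j *
                (![Real.cos θ, Real.sin θ] a)))) ∧
      Tendsto
        (fun rad : ℝ => ∑' z : Fin 2 → ℤ,
          η (rad⁻¹ • latticePt 2 A z) • Hop 2 N R (CofV R V) u (latticePt 2 A z))
        atTop
        (𝓝 (fun i : Fin N =>
          -(∫ θ in (0 : ℝ)..(2 * Real.pi),
            ∑ a : Fin 2, ∑ j : Fin N, ∑ bb : Fin 2,
              CB A R (CofV R V) i a j bb *
                F (xhat + ![Real.cos θ, Real.sin θ]) (Pi.single bb 1) j *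
                (![Real.cos θ, Real.sin θ] a)))) := by
  subst hΓ
  intro η hη _ hη₁ hη₀
  have hF_decay : F =O[Bornology.cobounded _] fun x ↦ ‖x‖⁻¹ ^ 1 :=
    isBigO_inv_norm_pow_of_norm_le_enorm_rpow fun x hx ↦
      norm_iteratedFDeriv_zero.symm.trans_le (hdecay 1 le_rfl (by norm_num) x hx)
  have hDF_decay : fderiv ℝ F =O[Bornology.cobounded _] fun x ↦ ‖x‖⁻¹ ^ 2 :=
    isBigO_inv_norm_pow_of_norm_le_enorm_rpow fun x hx ↦
      (norm_iteratedFDeriv_one F).symm.trans_le (hdecay 2 (by norm_num) (by norm_num) x hx)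
  simp only [pow_one] at hF_decay
  have hPDE' : ∀ i x, x ≠ xhat →
      divergence (fun y ↦ cauchyBornStress A R (CofV R V) i (F y)) x = 0 := fun i x hx ↦
    (divergence_cauchyBornStress_comp ((hFsmooth.differentiableOn (by norm_num)).differentiableAt
      (isOpen_ne.mem_nhds hx)) i).trans (hPDE x hx i)
  simpa only [unitCircleFlux_cauchyBornStress, dilate] using net_force_identity_general hA hRlat
    hV.contDiffAt (Set.forall_mem_range.2 hΓlat) hF (hFsmooth.of_le (by norm_num)) hjump hPDE'
    hF_decay hDF_decay (fun ρ hρ ↦ tendsto_D1_latticeAtInfinity_zero fun z ↦ hDdecay z ρ hρ)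
    (isCutoff_of_enorm (hη.of_le ENat.LEInfty.out) hη₁ hη₀)

end Defect
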